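/- arXiv:2002.02128 — 2 statements merged into one kernel-verified Lean document; each statement's English description precedes it below -/
import Mathlib

section
/- Let R be a Noetherian domain such that either R contains ℚ or R is seminormal (i.e., for all b, c ∈ R with b³ = c², there exists a ∈ R with a² = b and a³ = c). Let A be an 𝔸^{m+1}-fibration over R such that Ω_R(A) is a stably free A-module. Then for an m-tuple W = (W₁,…,W_m) of elements of A, the following are equivalent: (I) W is an m-tuple residual variable of A over R; (II) A is isomorphic, as an R[W]-algebra, to a polynomial ring in one variable over R[W] (and hence A is a polynomial ring in m+1 variables over R). -/
open TensorProduct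

noncomputable section

/-- The residue field `κ(P) = R_P / P R_P` of a commutative ring `R` at a prime ideal `P`. -/
abbrev ResidueFieldAt (R : Type*) [CommRing R] (P : Ideal R) [P.IsPrime] : Type _ :=
  IsLocalRing.ResidueField (Localization.AtPrime P)

/-- `A ⊗_R κ(P)` is a polynomial ring in `n` variables over `B ⊗_R κ(P)`
for every prime ideal `P` of `R`. -/
def FibersPolynomialOver (R B A : Type*) [CommRing R] [CommRing B] [CommRing A]
    [Algebra R B] [Algebra R A] [Algebra B A] [IsScalarTower R B A] (n : ℕ) : Prop :=
  ∀ (P : Ideal R) (_ : P.IsPrime),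
    letI : Algebra (ResidueFieldAt R P ⊗[R] B) (ResidueFieldAt R P ⊗[R] A) :=
      (Algebra.TensorProduct.map (AlgHom.id R (ResidueFieldAt R P))
        (IsScalarTower.toAlgHom R B A)).toRingHom.toAlgebra
    Nonempty ((ResidueFieldAt R P ⊗[R] A) ≃ₐ[ResidueFieldAt R P ⊗[R] B]
      MvPolynomial (Fin n) (ResidueFieldAt R P ⊗[R] B))

/-- `A` is an `𝔸ⁿ`-fibration over `R`: a finitely generated flat `R`-algebra all of whose
fibres are polynomial rings in `n` variables. -/
def IsAffineFibration (R A : Type*) [CommRing R] [CommRing A] [Algebra R A] (n : ℕ) : Prop :=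
  Algebra.FiniteType R A ∧ Module.Flat R A ∧
  ∀ (P : Ideal R) (_ : P.IsPrime),
    Nonempty ((ResidueFieldAt R P ⊗[R] A) ≃ₐ[ResidueFieldAt R P]
      MvPolynomial (Fin n) (ResidueFieldAt R P))

/-- `W` is an `m`-tuple residual variable of the `𝔸ⁿ`-fibration `A` over `R`. -/
def IsResidualVariable (R A : Type*) [CommRing R] [CommRing A] [Algebra R A]
    (n m : ℕ) (W : Fin m → A) : Prop :=
  AlgebraicIndependent R W ∧
  FibersPolynomialOver R (Algebra.adjoin R (Set.range W)) A (n - m)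

/-- A module `M` over `A` is stably free if `M ⊕ Aˢ ≅ Aᵗ` for some `s, t`. -/
def IsStablyFree (A M : Type*) [CommRing A] [AddCommGroup M] [Module A M] : Prop :=
  ∃ s t : ℕ, Nonempty ((M × (Fin s → A)) ≃ₗ[A] (Fin t → A))

end

namespace ResVar
universe u v w

theorem injective_of_fibers {R : Type u} [CommRing R] [IsNoetherianRing R]
    {M : Type v} {N : Type w} [AddCommGroup M] [Module R M] [AddCommGroup N] [Module R N]
    [Module.Flat R M] [Module.Flat R N] (φ : M →ₗ[R] N)
    (h : ∀ P : Ideal R, P.IsPrime → ∃ (k : Type u) (_ : Field k) (_ : Algebra R k),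
      RingHom.ker (algebraMap R k) = P ∧ Function.Injective (φ.lTensor k))
    (X : Type u) [AddCommGroup X] [Module R X] [hX : Module.Finite R X] :
    Function.Injective (φ.lTensor X) := by
  induction hX using IsNoetherianRing.induction_on_isQuotientEquivQuotientPrime R with
  | subsingleton N => exact Function.injective_of_subsingleton _
  | quotient Y p e =>
    obtain ⟨k, _, _, hk, hinj⟩ := h p.1 p.2
    let ι : (R ⧸ p.1) →ₗ[R] k := (Ideal.Quotient.liftₐ p.1 (Algebra.ofId R k)
      (fun a ha => by rw [← hk] at ha; exact ha)).toLinearMap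
    have hι : Function.Injective ι := by
      rw [← LinearMap.ker_eq_bot, eq_bot_iff]
      intro x hx
      obtain ⟨x, rfl⟩ := Ideal.Quotient.mk_surjective x
      have : algebraMap R k x = 0 := hx
      have : x ∈ p.1 := by rw [← hk]; exact this
      simpa using Ideal.Quotient.eq_zero_iff_mem.mpr this
    let j : Y →ₗ[R] k := ι ∘ₗ e.toLinearMap
    have hj : Function.Injective j := hι.comp e.injective
    have h1 : Function.Injective (j.rTensor M) :=
      Module.Flat.rTensor_preserves_injective_linearMap j hj
    have h2 : (j.rTensor N) ∘ₗ (φ.lTensor Y) = (φ.lTensor k) ∘ₗ (j.rTensor M) := by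
      rw [LinearMap.rTensor_comp_lTensor, LinearMap.lTensor_comp_rTensor]
    have h3 : Function.Injective ((j.rTensor N) ∘ₗ (φ.lTensor Y)) := by
      rw [h2]; exact hinj.comp h1
    exact Function.Injective.of_comp h3
  | exact N₁ N₂ N₃ f g hf hg hfg h1 h3 =>
    rw [← LinearMap.ker_eq_bot, eq_bot_iff]
    intro z hz
    have hz : φ.lTensor N₂ z = 0 := hz
    have e1 : g.rTensor N (φ.lTensor N₂ z) = φ.lTensor N₃ (g.rTensor M z) := by
      rw [← LinearMap.comp_apply, ← LinearMap.comp_apply,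
        LinearMap.rTensor_comp_lTensor, LinearMap.lTensor_comp_rTensor]
    have e2 : g.rTensor M z = 0 := h3 (by rw [← e1, hz]; simp)
    obtain ⟨y, rfl⟩ := (rTensor_exact M hfg hg z).mp e2
    have e3 : f.rTensor N (φ.lTensor N₁ y) = φ.lTensor N₂ (f.rTensor M y) := by
      rw [← LinearMap.comp_apply, ← LinearMap.comp_apply,
        LinearMap.rTensor_comp_lTensor, LinearMap.lTensor_comp_rTensor]
    have e4 : φ.lTensor N₁ y = 0 :=
      Module.Flat.rTensor_preserves_injective_linearMap (M := N) f hf (by rw [e3, hz]; simp)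
    have e5 : y = 0 := h1 (by rw [e4]; simp)
    simp [e5]

theorem flat_coker {R : Type u} [CommRing R] [IsNoetherianRing R]
    {M : Type v} {N : Type w} [AddCommGroup M] [Module R M] [AddCommGroup N] [Module R N]
    [Module.Flat R M] [Module.Flat R N] (φ : M →ₗ[R] N)
    (h : ∀ P : Ideal R, P.IsPrime → ∃ (k : Type u) (_ : Field k) (_ : Algebra R k),
      RingHom.ker (algebraMap R k) = P ∧ Function.Injective (φ.lTensor k)) :
    Module.Flat R (N ⧸ LinearMap.range φ) := by
  rw [Module.Flat.iff_rTensor_injective']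
  intro I
  set Q := N ⧸ LinearMap.range φ
  let π : N →ₗ[R] Q := (LinearMap.range φ).mkQ
  have hπ : Function.Surjective π := Submodule.mkQ_surjective _
  have hex : Function.Exact φ π := by
    rw [LinearMap.exact_iff]; exact Submodule.ker_mkQ _
  rw [← LinearMap.ker_eq_bot, eq_bot_iff]
  intro z hz
  have hz : (Submodule.subtype I).rTensor Q z = 0 := hz
  obtain ⟨z', rfl⟩ := LinearMap.lTensor_surjective I hπ z
  have e1 : π.lTensor R ((Submodule.subtype I).rTensor N z') = 0 := by
    rw [← hz, ← LinearMap.comp_apply, ← LinearMap.comp_apply,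
        LinearMap.rTensor_comp_lTensor, LinearMap.lTensor_comp_rTensor]
  obtain ⟨m, hm⟩ := (lTensor_exact R hex hπ _).mp e1
  have hIex : Function.Exact (Submodule.subtype I) (Submodule.mkQ I) := by
    rw [LinearMap.exact_iff]; simp
  have e2 : φ.lTensor (R ⧸ I) ((Submodule.mkQ I).rTensor M m) = 0 := by
    have : φ.lTensor (R ⧸ I) ((Submodule.mkQ I).rTensor M m)
        = (Submodule.mkQ I).rTensor N (φ.lTensor R m) := by
      rw [← LinearMap.comp_apply, ← LinearMap.comp_apply,
        LinearMap.rTensor_comp_lTensor, LinearMap.lTensor_comp_rTensor]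
    rw [this, hm, ← LinearMap.comp_apply, ← LinearMap.rTensor_comp, hIex.linearMap_comp_eq_zero]
    simp
  have e3 : (Submodule.mkQ I).rTensor M m = 0 :=
    injective_of_fibers φ h (R ⧸ I) (by rw [e2]; simp)
  obtain ⟨m', rfl⟩ := (rTensor_exact M hIex (Submodule.mkQ_surjective _) _).mp e3
  have e4 : φ.lTensor I m' = z' := by
    apply Module.Flat.rTensor_preserves_injective_linearMap (M := N) (Submodule.subtype I)
      (Submodule.subtype_injective I)
    rw [← hm, ← LinearMap.comp_apply, ← LinearMap.comp_apply,
        LinearMap.rTensor_comp_lTensor, LinearMap.lTensor_comp_rTensor]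
  rw [← e4, ← LinearMap.comp_apply, ← LinearMap.lTensor_comp, hex.linearMap_comp_eq_zero]
  simp

theorem subsingleton_of_fibers {R : Type u} [CommRing R] [IsNoetherianRing R]
    {Q : Type v} [AddCommGroup Q] [Module R Q] [Module.Flat R Q]
    (h : ∀ P : Ideal R, P.IsPrime → ∃ (k : Type u) (_ : Field k) (_ : Algebra R k),
      RingHom.ker (algebraMap R k) = P ∧ ∀ y : k ⊗[R] Q, y = 0) :
    ∀ q : Q, q = 0 := by
  by_contra! hne
  obtain ⟨q₀, hq₀⟩ := hne
  obtain ⟨I, hI, hmax⟩ : ∃ I : Ideal R, I • (⊤ : Submodule R Q) ≠ ⊤ ∧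
      ∀ J : Ideal R, I < J → J • (⊤ : Submodule R Q) = ⊤ := by
    obtain ⟨I, hI, hmax⟩ := set_has_maximal_iff_noetherian.mpr
      (inferInstanceAs (IsNoetherian R R))
      {I : Ideal R | I • (⊤ : Submodule R Q) ≠ ⊤} ⟨⊥, by
        intro h0
        have : q₀ ∈ (⊥ : Ideal R) • (⊤ : Submodule R Q) := by rw [h0]; trivial
        rw [Submodule.bot_smul] at this
        exact hq₀ (by simpa using this)⟩
    refine ⟨I, hI, fun J hJ => ?_⟩
    by_contra hc
    exact hmax J hc hJ
  have hprime : I.IsPrime := by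
    refine ⟨?_, ?_⟩
    · rintro rfl; exact hI (Submodule.top_smul _)
    · intro a b hab
      by_contra! hc
      have ha := hmax (I ⊔ Ideal.span {a})
        (left_lt_sup.mpr fun hle => hc.1 (hle (Ideal.mem_span_singleton_self a)))
      have hb := hmax (I ⊔ Ideal.span {b})
        (left_lt_sup.mpr fun hle => hc.2 (hle (Ideal.mem_span_singleton_self b)))
      have h1 : ((I ⊔ Ideal.span {a}) * (I ⊔ Ideal.span {b})) • (⊤ : Submodule R Q) = ⊤ := by
        rw [Submodule.mul_smul, hb, ha]
      have h2 : (I ⊔ Ideal.span {a}) * (I ⊔ Ideal.span {b}) ≤ I := by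
        rw [Ideal.sup_mul, Ideal.mul_sup, Ideal.mul_sup]
        refine sup_le (sup_le Ideal.mul_le_left Ideal.mul_le_left)
          (sup_le Ideal.mul_le_right ?_)
        rw [Ideal.span_singleton_mul_span_singleton, Ideal.span_singleton_le_iff_mem]
        exact hab
      exact hI (top_unique (h1.symm.le.trans (Submodule.smul_mono_left h2)))
  obtain ⟨k, _, _, hk, hsub⟩ := h I hprime
  let ι : (R ⧸ I) →ₗ[R] k := (Ideal.Quotient.liftₐ I (Algebra.ofId R k)
    (fun a ha => by rw [← hk] at ha; exact ha)).toLinearMap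
  have hι : Function.Injective ι := by
    rw [← LinearMap.ker_eq_bot, eq_bot_iff]
    intro x hx
    obtain ⟨x, rfl⟩ := Ideal.Quotient.mk_surjective x
    have : algebraMap R k x = 0 := hx
    have : x ∈ I := by rw [← hk]; exact this
    simpa using Ideal.Quotient.eq_zero_iff_mem.mpr this
  have h1 := Module.Flat.rTensor_preserves_injective_linearMap (M := Q) ι hι
  apply hI
  rw [eq_top_iff]
  intro q _
  have h2 : (1 : R ⧸ I) ⊗ₜ[R] q = 0 := h1 (by rw [hsub (ι.rTensor Q _), map_zero])
  have h3 := congrArg (TensorProduct.quotTensorEquivQuotSMul Q I) h2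
  rw [map_zero] at h3
  have h4 : (TensorProduct.quotTensorEquivQuotSMul Q I) ((1 : R ⧸ I) ⊗ₜ[R] q)
    = Submodule.Quotient.mk q := by
    simp
  rw [h4] at h3
  exact (Submodule.Quotient.mk_eq_zero _).mp h3

theorem bijective_of_fibers {R : Type u} [CommRing R] [IsNoetherianRing R]
    {M : Type v} {N : Type w} [AddCommGroup M] [Module R M] [AddCommGroup N] [Module R N]
    [Module.Flat R M] [Module.Flat R N] (φ : M →ₗ[R] N)
    (h : ∀ P : Ideal R, P.IsPrime → ∃ (k : Type u) (_ : Field k) (_ : Algebra R k),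
      RingHom.ker (algebraMap R k) = P ∧ Function.Bijective (φ.lTensor k)) :
    Function.Bijective φ := by
  have h' : ∀ P : Ideal R, P.IsPrime → ∃ (k : Type u) (_ : Field k) (_ : Algebra R k),
      RingHom.ker (algebraMap R k) = P ∧ Function.Injective (φ.lTensor k) := by
    intro P hP
    obtain ⟨k, i1, i2, hk, hb⟩ := h P hP
    exact ⟨k, i1, i2, hk, hb.1⟩
  constructor
  · have h1 := injective_of_fibers φ h' R
    have : φ = (TensorProduct.lid R N).toLinearMap ∘ₗ (φ.lTensor R) ∘ₗ
        (TensorProduct.lid R M).symm.toLinearMap := by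
      ext; simp
    rw [this]
    exact (TensorProduct.lid R N).injective.comp (h1.comp (TensorProduct.lid R M).symm.injective)
  · have hfl := flat_coker φ h'
    have key := subsingleton_of_fibers (R := R) (Q := N ⧸ LinearMap.range φ) (by
      intro P hP
      obtain ⟨k, i1, i2, hk, hb⟩ := h P hP
      refine ⟨k, i1, i2, hk, fun y => ?_⟩
      obtain ⟨n, rfl⟩ := LinearMap.lTensor_surjective k
        (Submodule.mkQ_surjective (LinearMap.range φ)) y
      obtain ⟨m, rfl⟩ := hb.2 n
      rw [← LinearMap.comp_apply, ← LinearMap.lTensor_comp, LinearMap.range_mkQ_comp]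
      simp)
    intro x
    exact (Submodule.Quotient.mk_eq_zero _).mp (key (Submodule.Quotient.mk x))
end ResVar

namespace ResVar
universe u v w

section QN
variable {R : Type u} [CommRing R] {K : Type v} [Field K] [Algebra R K]
  (Q : Type w) [AddCommGroup Q] [Module R Q]

/-- the image of `N ⊗ Q` in `K ⊗ Q`. -/
noncomputable def QN (N : Submodule R K) : Submodule R (K ⊗[R] Q) :=
  LinearMap.range (N.subtype.rTensor Q)

variable {Q}

theorem QN_tmul {N : Submodule R K} {x : K} (hx : x ∈ N) (q : Q) : x ⊗ₜ[R] q ∈ QN Q N :=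
  ⟨(⟨x, hx⟩ : N) ⊗ₜ q, by simp⟩

theorem QN_induction {N : Submodule R K} {p : K ⊗[R] Q → Prop} (h0 : p 0)
    (ht : ∀ x ∈ N, ∀ q, p (x ⊗ₜ q)) (hadd : ∀ x y, p x → p y → p (x + y))
    {y : K ⊗[R] Q} (hy : y ∈ QN Q N) : p y := by
  obtain ⟨z, rfl⟩ := hy
  induction z with
  | zero => simpa using h0
  | tmul x q => simpa using ht x x.2 q
  | add a b ha hb => rw [map_add]; exact hadd _ _ ha hb

theorem QN_mono {N N' : Submodule R K} (h : N ≤ N') : QN Q N ≤ QN Q N' := by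
  intro y hy
  exact QN_induction (p := fun y => y ∈ QN Q N') (zero_mem _)
    (fun x hx q => QN_tmul (h hx) q) (fun _ _ ha hb => add_mem ha hb) hy

theorem QN_smul {N N' : Submodule R K} (c : K) (h : ∀ x ∈ N, c * x ∈ N')
    {y : K ⊗[R] Q} (hy : y ∈ QN Q N) : c • y ∈ QN Q N' := by
  refine QN_induction (p := fun y => c • y ∈ QN Q N') ?_ ?_ ?_ hy
  · simp
  · intro x hx q
    rw [TensorProduct.smul_tmul', smul_eq_mul]
    exact QN_tmul (h x hx) q
  · intro a b ha hb
    rw [smul_add]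
    exact add_mem ha hb

theorem exists_of_rTensor_eq_zero [Module.Flat R Q] {M : Type*} {M' : Type*} [AddCommGroup M] [Module R M]
    [AddCommGroup M'] [Module R M'] (f : M →ₗ[R] M') (z : M ⊗[R] Q) (h : f.rTensor Q z = 0) :
    ∃ t, (LinearMap.ker f).subtype.rTensor Q t = z := by
  have hex : Function.Exact (LinearMap.ker f).subtype f := LinearMap.exact_subtype_ker_map f
  have hex2 : Function.Exact ((LinearMap.ker f).subtype.rTensor Q) (f.rTensor Q) :=
    Module.Flat.rTensor_exact Q hex
  exact (hex2 z).mp h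

theorem QN_inf [Module.Flat R Q] {N N' : Submodule R K} {y : K ⊗[R] Q}
    (h : y ∈ QN Q N) (h' : y ∈ QN Q N') : y ∈ QN Q (N ⊓ N') := by
  obtain ⟨z, rfl⟩ := h
  obtain ⟨z', hz'⟩ := h'
  obtain ⟨f, hf⟩ : ∃ f : N →ₗ[R] (K ⧸ N'), f = N'.mkQ ∘ₗ N.subtype := ⟨_, rfl⟩
  have h1 : f.rTensor Q z = 0 := by
    rw [hf, LinearMap.rTensor_comp, LinearMap.comp_apply, ← hz', ← LinearMap.comp_apply,
      ← LinearMap.rTensor_comp]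
    have : N'.mkQ ∘ₗ N'.subtype = 0 := by ext; simp
    rw [this]; simp
  obtain ⟨t, rfl⟩ := exists_of_rTensor_eq_zero f z h1
  rw [← LinearMap.comp_apply, ← LinearMap.rTensor_comp]
  clear h1 hz'
  induction t with
  | zero => simp
  | tmul x q =>
    simp only [LinearMap.rTensor_tmul, LinearMap.comp_apply, Submodule.subtype_apply]
    have h2 : (x : N).1 ∈ N' := by
      have h3 : f x.1 = 0 := x.2
      have h4 : f x.1 = N'.mkQ (x.1 : K) := LinearMap.congr_fun hf x.1
      rw [h4] at h3
      simpa using h3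
    exact QN_tmul (Submodule.mem_inf.mpr ⟨x.1.2, h2⟩) q
  | add a b ha hb =>
    rw [map_add]
    exact add_mem ha hb

theorem QN_top (y : K ⊗[R] Q) : y ∈ QN Q (⊤ : Submodule R K) := by
  induction y with
  | zero => exact zero_mem _
  | tmul x q => exact QN_tmul Submodule.mem_top q
  | add a b ha hb => exact add_mem ha hb

theorem QN_finset_inf [Module.Flat R Q] {ι : Type*} (s : Finset ι) (N : ι → Submodule R K)
    {y : K ⊗[R] Q} (h : ∀ i ∈ s, y ∈ QN Q (N i)) : y ∈ QN Q (s.inf N) := by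
  classical
  induction s using Finset.induction_on with
  | empty => simpa using QN_top y
  | insert a s ha ih =>
    rw [Finset.inf_insert]
    exact QN_inf (h a (by simp)) (ih fun i hi => h i (by simp [hi]))

theorem QN_fg {N : Submodule R K} {y : K ⊗[R] Q} (hy : y ∈ QN Q N) :
    ∃ s : Finset K, (∀ x ∈ s, x ∈ N) ∧ y ∈ QN Q (Submodule.span R (s : Set K)) := by
  classical
  refine QN_induction (p := fun y => ∃ s : Finset K, (∀ x ∈ s, x ∈ N) ∧
    y ∈ QN Q (Submodule.span R (s : Set K))) ⟨∅, by simp, zero_mem _⟩ ?_ ?_ hy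
  · intro x hx q
    exact ⟨{x}, by simpa using hx, QN_tmul (Submodule.subset_span (by simp)) q⟩
  · rintro a b ⟨s, hs, has⟩ ⟨t, ht, hbt⟩
    refine ⟨s ∪ t, ?_, add_mem (QN_mono (Submodule.span_mono ?_) has)
      (QN_mono (Submodule.span_mono ?_) hbt)⟩
    · intro x hx
      rcases Finset.mem_union.mp hx with h | h
      exacts [hs x h, ht x h]
    · simp
    · simp

attribute [irreducible] QN

/-- A valuation subring as a submodule. -/
def VS (V : ValuationSubring K) (hV : ∀ r : R, algebraMap R K r ∈ V) : Submodule R K where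
  carrier := {x | x ∈ V}
  add_mem' := fun ha hb => V.add_mem _ _ ha hb
  zero_mem' := V.zero_mem
  smul_mem' := fun r x hx => by
    rw [Algebra.smul_def]; exact V.mul_mem _ _ (hV r) hx

/-- The maximal ideal of a valuation subring as a submodule. -/
def VM (V : ValuationSubring K) (hV : ∀ r : R, algebraMap R K r ∈ V) : Submodule R K where
  carrier := {x | V.valuation x < 1}
  add_mem' := fun {a b} ha hb => (V.valuation.map_add a b).trans_lt (max_lt ha hb)
  zero_mem' := by simp
  smul_mem' := fun r x hx => by
    rw [Algebra.smul_def, Set.mem_ofPred_eq, map_mul]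
    exact (mul_le_of_le_one_left' ((V.valuation_le_one_iff _).mpr (hV r))).trans_lt hx

end QN

theorem exists_valuationSubring_center {K : Type u} [Field K] (S : Subring K) (p : Ideal S)
    [p.IsPrime] : ∃ V : ValuationSubring K, S ≤ V.toSubring ∧
      ∀ s : S, V.valuation (s : K) < 1 ↔ s ∈ p := by
  obtain ⟨V, hV⟩ := (LocalSubring.ofPrime S p).exists_le_valuationSubring
  refine ⟨V, (LocalSubring.le_ofPrime ..).trans hV.1, ?_⟩
  intro s
  have hle := (LocalSubring.le_ofPrime S p).trans hV.1
  have hs : (s : K) ∈ V := hle s.2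
  obtain ⟨h1, h2⟩ := hV
  have e1 : V.valuation (s : K) < 1 ↔ ¬ IsUnit (⟨s, hs⟩ : V) := by
    rw [← mem_nonunits_iff, ← IsLocalRing.mem_maximalIdeal]
    exact (V.valuation_lt_one_iff ⟨s, hs⟩).symm
  have e2 : IsUnit (⟨s, hs⟩ : V) ↔ IsUnit (algebraMap S (LocalSubring.ofPrime S p).toSubring s) := by
    constructor
    · intro h
      exact h2.1 _ h
    · intro h
      exact h.map (Subring.inclusion h1)
  rw [e1, e2, IsLocalization.AtPrime.isUnit_to_map_iff (LocalSubring.ofPrime S p).toSubring p]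
  simp [Ideal.primeCompl]

theorem isArtinian_of_pow {O : Type u} [CommRing O] [IsNoetherianRing O]
    (I : Ideal O) [I.IsMaximal] (n : ℕ) (X : Type v) [AddCommGroup X] [Module O X]
    [hX : Module.Finite O X] (h : ∀ y ∈ I ^ n, ∀ x : X, y • x = 0) : IsArtinian O X := by
  induction hX using IsNoetherianRing.induction_on_isQuotientEquivQuotientPrime O with
  | subsingleton N => infer_instance
  | quotient Y p e =>
    have hle : I ≤ p.1 := by
      have hp := p.2
      apply hp.le_of_pow_le (n := n)
      intro y hy
      have := h y hy (e.symm 1)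
      rw [← map_smul, LinearEquiv.map_eq_zero_iff] at this
      rw [← Ideal.Quotient.eq_zero_iff_mem, ← this, Algebra.smul_def]
      simp
    have hpI : I = p.1 := Ideal.IsMaximal.eq_of_le inferInstance p.2.ne_top hle
    have : p.1.IsMaximal := hpI ▸ inferInstance
    have : IsSimpleModule O (O ⧸ p.1) :=
      isSimpleModule_iff_quot_maximal.mpr ⟨p.1, this, ⟨LinearEquiv.refl _ _⟩⟩
    have : IsArtinian O (O ⧸ p.1) := inferInstance
    exact isArtinian_of_linearEquiv e.symm
  | exact N₁ N₂ N₃ f g hf hg hfg h1 h3 =>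
    have a1 := h1 (fun y hy x => hf (by rw [map_smul, h y hy, map_zero]))
    have a3 := h3 (fun y hy x => by
      obtain ⟨x, rfl⟩ := hg x
      rw [← map_smul, h y hy, map_zero])
    exact isArtinian_of_range_eq_ker f g (LinearMap.exact_iff.mp hfg).symm
end ResVar

namespace ResVar
universe u v w
set_option linter.unusedSectionVars false

section Descent
variable {R : Type u} [CommRing R] {K : Type u} [Field K] [Algebra R K]
  {Q : Type w} [AddCommGroup Q] [Module R Q]
  {O : Type u} [CommRing O] [IsDomain O] [Algebra R O] [Algebra O K] [IsScalarTower R O K]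

theorem descent_min [IsFractionRing O K] [IsLocalRing O] [IsNoetherianRing O] [Module.Flat R Q]
    (τ : K ⊗[R] Q) (n : ℕ)
    (y₀ : O) (hy₀ : y₀ ≠ 0) (hy₀m : y₀ ∈ IsLocalRing.maximalIdeal O ^ n)
    (hn : ∀ y ∈ IsLocalRing.maximalIdeal O ^ n,
      algebraMap O K y • τ ∈ QN Q ((1 : Submodule O K).restrictScalars R)) :
    ∃ M : Submodule O K, 1 ≤ M ∧ M.FG ∧ τ ∈ QN Q (M.restrictScalars R) ∧
      (∀ y ∈ IsLocalRing.maximalIdeal O ^ n, ∀ x ∈ M, y • x ∈ (1 : Submodule O K)) ∧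
      ∀ M' : Submodule O K, 1 ≤ M' → M' ≤ M → τ ∈ QN Q (M'.restrictScalars R) → M' = M := by
  classical
  obtain ⟨s, hs⟩ : (IsLocalRing.maximalIdeal O ^ n).FG := IsNoetherian.noetherian _
  let F : O → Submodule O K := fun y => (1 : Submodule O K).comap (LinearMap.lsmul O K y)
  let N : Submodule O K := s.inf F
  have hNmem : ∀ x ∈ N, ∀ y ∈ IsLocalRing.maximalIdeal O ^ n, y • x ∈ (1 : Submodule O K) := by
    intro x hx y hy
    rw [← hs] at hy
    have : Submodule.span O (s : Set O) ≤ (1 : Submodule O K).comap ((LinearMap.lsmul O K).flip x) := by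
      rw [Submodule.span_le]
      intro y hy
      exact (Submodule.mem_finsetInf.mp hx) y hy
    exact this hy
  have h1N : (1 : Submodule O K) ≤ N := by
    refine Finset.le_inf fun y _ => ?_
    intro x hx
    exact Submodule.smul_mem _ _ hx
  have hτN : τ ∈ QN Q (N.restrictScalars R) := by
    have h1 : τ ∈ QN Q (s.inf fun y => (F y).restrictScalars R) := by
      refine QN_finset_inf s _ fun y hy => ?_
      by_cases hy0 : y = 0
      · refine QN_mono ?_ (QN_top τ)
        intro x _
        subst hy0
        simp [F]
      · have h2 := hn y (hs ▸ Submodule.subset_span hy)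
        have hy1 : algebraMap O K y ≠ 0 := by simpa using hy0
        have : τ = (algebraMap O K y)⁻¹ • (algebraMap O K y • τ) := by
          rw [smul_smul, inv_mul_cancel₀ hy1, one_smul]
        rw [this]
        refine QN_smul _ ?_ h2
        intro x hx
        show y • _ ∈ (1 : Submodule O K)
        rw [Algebra.smul_def, mul_inv_cancel_left₀ hy1]
        exact hx
    refine QN_mono ?_ h1
    intro x hx
    show x ∈ s.inf F
    rw [Submodule.mem_finsetInf] at hx ⊢
    exact hx
  have hNn : IsNoetherian O N := by
    let g : N →ₗ[O] (1 : Submodule O K) :=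
      (LinearMap.lsmul O K y₀ ∘ₗ N.subtype).codRestrict _ (fun x => hNmem x x.2 y₀ hy₀m)
    have : IsNoetherian O (1 : Submodule O K) := by
      rw [Submodule.one_eq_range]
      exact isNoetherian_of_surjective (f := (Algebra.linearMap O K).rangeRestrict)
        (LinearMap.range_eq_top.mpr (LinearMap.surjective_rangeRestrict _))
    refine isNoetherian_of_injective g ?_
    rw [← LinearMap.ker_eq_bot, LinearMap.ker_eq_bot']
    intro x hx
    have h3 : y₀ • (x : K) = 0 := congrArg Subtype.val hx
    rw [Algebra.smul_def, mul_eq_zero] at h3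
    rcases h3 with h3 | h3
    · exact absurd (by simpa using h3) hy₀
    · exact Subtype.ext h3
  have hArt : IsArtinian O (N ⧸ (1 : Submodule O K).comap N.subtype) := by
    refine isArtinian_of_pow (IsLocalRing.maximalIdeal O) n _ ?_
    intro y hy x
    obtain ⟨x, rfl⟩ := Submodule.mkQ_surjective _ x
    rw [← map_smul, Submodule.mkQ_apply, Submodule.Quotient.mk_eq_zero]
    exact hNmem x x.2 y hy
  let mk := ((1 : Submodule O K).comap N.subtype).mkQ
  let G : Submodule O (N ⧸ (1 : Submodule O K).comap N.subtype) → Submodule O K := fun L =>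
    (L.comap mk).map N.subtype
  have hGN : ∀ L, G L ≤ N := by
    intro L
    rintro _ ⟨x, _, rfl⟩
    exact x.2
  have hG1 : ∀ L, 1 ≤ G L := by
    intro L x hx
    refine ⟨⟨x, h1N hx⟩, ?_, rfl⟩
    show mk _ ∈ L
    have : mk ⟨x, h1N hx⟩ = 0 := (Submodule.Quotient.mk_eq_zero _).mpr hx
    rw [this]
    exact zero_mem _
  have hGsurj : ∀ M', 1 ≤ M' → M' ≤ N → ∀ L, M' ≤ G L → ∃ L' ≤ L, G L' = M' := by
    intro M' h1 h2 L hL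
    refine ⟨(M'.comap N.subtype).map mk, ?_, ?_⟩
    · rintro _ ⟨x, hx, rfl⟩
      obtain ⟨x', hx', h⟩ := hL hx
      have : x' = x := Subtype.ext h
      exact this ▸ hx'
    · apply le_antisymm
      · rintro _ ⟨x, ⟨x', hx', h⟩, rfl⟩
        have h5 : x' - x ∈ (1 : Submodule O K).comap N.subtype := (Submodule.Quotient.eq _).mp h
        have h6 : (x' : K) - x ∈ M' := h1 h5
        have h7 : (x' : K) ∈ M' := hx'
        have := sub_mem h7 h6
        simpa using this
      · intro x hx
        exact ⟨⟨x, h2 hx⟩, ⟨⟨x, h2 hx⟩, hx, rfl⟩, rfl⟩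
  obtain ⟨L0, _, hL0⟩ := hGsurj N h1N le_rfl ⊤ (by
    intro x hx; exact ⟨⟨x, hx⟩, Submodule.mem_top, rfl⟩)
  let T : Set (Submodule O (N ⧸ (1 : Submodule O K).comap N.subtype)) :=
    {L | τ ∈ QN Q ((G L).restrictScalars R)}
  have hT : T.Nonempty := ⟨L0, by show τ ∈ QN Q ((G L0).restrictScalars R); rw [hL0]; exact hτN⟩
  obtain ⟨L, hLT, hLmin⟩ := WellFounded.has_min (wellFounded_lt (α := Submodule O (N ⧸ (1 : Submodule O K).comap N.subtype))) T hT
  refine ⟨G L, hG1 L, ?_, hLT, fun y hy x hx => hNmem x (hGN L hx) y hy, ?_⟩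
  · exact Submodule.FG.map _ (IsNoetherian.noetherian _)
  · intro M' h1 h2 h3
    obtain ⟨L', hle, rfl⟩ := hGsurj M' h1 (h2.trans (hGN L)) L h2
    have := hLmin L' h3
    rcases hle.lt_or_eq with h | h
    · exact absurd h this
    · rw [h]

theorem descent_le_V [Module.Flat R Q]
    (τ : K ⊗[R] Q)
    (ha : ∀ (V : ValuationSubring K) (hV : ∀ r : R, algebraMap R K r ∈ V) (c : K), c ≠ 0 →
      V.valuation c < 1 → c • τ ∈ QN Q (VS V hV) → c • τ ∈ QN Q (VM V hV))
    (M : Submodule O K) (h1 : 1 ≤ M) (hfg : M.FG) (hτ : τ ∈ QN Q (M.restrictScalars R))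
    (hmin : ∀ M' : Submodule O K, 1 ≤ M' → M' ≤ M → τ ∈ QN Q (M'.restrictScalars R) → M' = M)
    (V : ValuationSubring K) (hV : ∀ r : O, algebraMap O K r ∈ V) :
    ∀ x ∈ M, x ∈ V := by
  classical
  have hVR : ∀ r : R, algebraMap R K r ∈ V := fun r => by
    rw [IsScalarTower.algebraMap_apply R O K]; exact hV _
  obtain ⟨s, hs⟩ := hfg
  have h1M : (1 : K) ∈ M := h1 (Submodule.one_le.mp le_rfl)
  have hne : s.Nonempty := by
    by_contra h
    rw [Finset.not_nonempty_iff_eq_empty] at h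
    subst h
    rw [← hs] at h1M
    simp at h1M
  obtain ⟨t, hts, htmax⟩ := s.exists_max_image V.valuation hne
  have hle : ∀ x ∈ M, V.valuation x ≤ V.valuation t := by
    intro x hx
    rw [← hs] at hx
    induction hx using Submodule.span_induction with
    | mem x hx => exact htmax x hx
    | zero => simp
    | add x y _ _ hx hy => exact (V.valuation.map_add x y).trans (max_le hx hy)
    | smul r x _ hx =>
      rw [Algebra.smul_def, map_mul]
      exact (mul_le_of_le_one_left' ((V.valuation_le_one_iff _).mpr (hV r))).trans hx
  have htM : t ∈ M := hs ▸ Submodule.subset_span hts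
  have ht1 : 1 ≤ V.valuation t := by simpa using hle 1 h1M
  by_cases htV : V.valuation t ≤ 1
  · intro x hx
    exact (V.valuation_le_one_iff _).mp ((hle x hx).trans htV)
  exfalso
  rw [not_le] at htV
  have ht0 : t ≠ 0 := by
    rintro rfl
    simp at ht1
  have hc : V.valuation t⁻¹ < 1 := by
    rw [map_inv₀]
    exact inv_lt_one_of_one_lt₀ htV
  have h2 : t⁻¹ • τ ∈ QN Q (VS V hVR) := by
    refine QN_smul _ ?_ hτ
    intro x hx
    show _ ∈ V
    rw [← V.valuation_le_one_iff, map_mul, map_inv₀]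
    have h0 : V.valuation t ≠ 0 := by simpa using ht0
    rw [inv_mul_le_iff₀ (zero_lt_iff.mpr h0), mul_one]
    exact hle x hx
  have h3 := ha V hVR t⁻¹ (inv_ne_zero ht0) hc h2
  let M1 : Submodule O K := (VM V hV).comap (LinearMap.mulLeft O t⁻¹)
  have h4 : τ ∈ QN Q (M1.restrictScalars R) := by
    have : τ = t • (t⁻¹ • τ) := by rw [smul_smul, mul_inv_cancel₀ ht0, one_smul]
    rw [this]
    refine QN_smul _ ?_ h3
    intro x hx
    show V.valuation (t⁻¹ * (t * x)) < 1
    rw [inv_mul_cancel_left₀ ht0]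
    exact hx
  have h5 : τ ∈ QN Q ((M ⊓ M1).restrictScalars R) := by
    have h5' := QN_inf hτ h4
    refine QN_mono ?_ h5'
    intro x hx
    exact hx
  have h6 : 1 ≤ M ⊓ M1 := by
    refine le_inf h1 ?_
    rw [Submodule.one_le]
    show V.valuation (t⁻¹ * 1) < 1
    rwa [mul_one]
  have h7 := hmin _ h6 inf_le_left h5
  have h8 : t ∈ M1 := by
    have : t ∈ M ⊓ M1 := by rw [h7]; exact htM
    exact this.2
  have h9 : V.valuation (t⁻¹ * t) < 1 := h8
  rw [inv_mul_cancel₀ ht0, map_one] at h9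
  exact lt_irrefl _ h9
end Descent
end ResVar

namespace ResVar
universe u v w
set_option linter.unusedSectionVars false

theorem isIntegral_of_forall_valuationSubring {O K : Type u} [CommRing O] [Field K] [Algebra O K]
    (x : K) (h : ∀ V : ValuationSubring K, (∀ o : O, algebraMap O K o ∈ V) → x ∈ V) :
    IsIntegral O x := by
  have h1 : x ∈ (integralClosure (Subring.closure (Set.range (algebraMap O K))) K).toSubring := by
    rw [← iInf_valuationSubring_superset, Subring.mem_iInf]
    rintro ⟨V, hV⟩
    exact h V fun o => hV ⟨o, rfl⟩
  obtain ⟨p, hp, hpx⟩ : IsIntegral (Subring.closure (Set.range (algebraMap O K))) x := h1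
  have hcl : Subring.closure (Set.range (algebraMap O K)) = (algebraMap O K).range := by
    rw [← RingHom.coe_range, Subring.closure_eq]
  let f : O →+* Subring.closure (Set.range (algebraMap O K)) :=
    (algebraMap O K).codRestrict _ (fun o => Subring.subset_closure ⟨o, rfl⟩)
  have hf : Function.Surjective f := by
    rintro ⟨y, hy⟩
    rw [hcl] at hy
    obtain ⟨o, rfl⟩ := hy
    exact ⟨o, rfl⟩
  obtain ⟨q, hq, -, hqm⟩ := Polynomial.lifts_and_natDegree_eq_and_monic
    ((Polynomial.lifts_iff_coeff_lifts p).mpr fun n => hf _) hp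
  refine ⟨q, hqm, ?_⟩
  rw [← hq, Polynomial.eval₂_map] at hpx
  exact hpx

section Descent
variable {R : Type u} [CommRing R] {K : Type u} [Field K] [Algebra R K]
  {Q : Type w} [AddCommGroup Q] [Module R Q]
  {O : Type u} [CommRing O] [IsDomain O] [Algebra R O] [Algebra O K] [IsScalarTower R O K]

theorem exists_pow_smul_adjoin (M : Submodule O K) (y : O) (n : ℕ)
    (hM : ∀ x ∈ M, y ^ n • x ∈ (1 : Submodule O K))
    (hfg : (Algebra.adjoin O (M : Set K)).toSubmodule.FG) :
    ∃ j, ∀ s ∈ Algebra.adjoin O (M : Set K), y ^ j • s ∈ (1 : Submodule O K) := by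
  have hmono : ∀ (s : K) (i j : ℕ), i ≤ j → y ^ i • s ∈ (1 : Submodule O K) →
      y ^ j • s ∈ (1 : Submodule O K) := by
    intro s i j hij h
    obtain ⟨k, rfl⟩ := Nat.exists_eq_add_of_le' hij
    rw [pow_add, mul_smul]
    exact Submodule.smul_mem _ _ h
  have h1 : ∀ s ∈ Algebra.adjoin O (M : Set K), ∃ j, y ^ j • s ∈ (1 : Submodule O K) := by
    intro s hs
    induction hs using Algebra.adjoin_induction with
    | mem x hx => exact ⟨n, hM x hx⟩
    | algebraMap r => exact ⟨0, by simp⟩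
    | add a b _ _ ha hb =>
      obtain ⟨i, hi⟩ := ha
      obtain ⟨j, hj⟩ := hb
      refine ⟨i + j, ?_⟩
      rw [smul_add]
      exact add_mem (hmono _ _ _ (by omega) hi) (hmono _ _ _ (by omega) hj)
    | mul a b _ _ ha hb =>
      obtain ⟨i, hi⟩ := ha
      obtain ⟨j, hj⟩ := hb
      refine ⟨i + j, ?_⟩
      have : y ^ (i + j) • (a * b) = (y ^ i • a) * (y ^ j • b) := by
        rw [pow_add, smul_mul_smul_comm]
      rw [this]
      have := Submodule.mul_mem_mul hi hj
      rwa [one_mul] at this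
  obtain ⟨G, hG⟩ := hfg
  have hGm : ∀ g ∈ G, ∃ j, y ^ j • g ∈ (1 : Submodule O K) := fun g hg => h1 g (by
    have : g ∈ (Algebra.adjoin O (M : Set K)).toSubmodule := hG ▸ Submodule.subset_span hg
    exact this)
  choose! j hj using hGm
  refine ⟨∑ g ∈ G, j g, ?_⟩
  intro s hs
  have hs' : s ∈ Submodule.span O (G : Set K) := by rw [hG]; exact hs
  induction hs' using Submodule.span_induction with
  | mem x hx => exact hmono _ _ _ (Finset.single_le_sum (f := j) (fun _ _ => Nat.zero_le _) hx) (hj x hx)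
  | zero => simp
  | add a b ha' hb' ha hb =>
    rw [smul_add]
    rw [hG] at ha' hb'
    exact add_mem (ha ha') (hb hb')
  | smul r x hx' hx =>
    rw [hG] at hx'
    rw [smul_comm]
    exact Submodule.smul_mem _ _ (hx hx')

theorem smul_adjoin_mem (S : Subalgebra O K)
    (hsn : ∀ x : K, x ^ 2 ∈ (1 : Submodule O K) → x ^ 3 ∈ (1 : Submodule O K) →
      x ∈ (1 : Submodule O K)) (y : O) (j : ℕ)
    (h : ∀ s ∈ S, y ^ (j + 1) • s ∈ (1 : Submodule O K)) :
    ∀ s ∈ S, y • s ∈ (1 : Submodule O K) := by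
  induction j with
  | zero => simpa using h
  | succ j ih =>
    refine ih fun s hs => hsn _ ?_ ?_
    · have : (y ^ (j + 1) • s) ^ 2 = y ^ (j + 1 + 1) • (y ^ j • s ^ 2) := by
        rw [smul_pow, smul_smul]; congr 1; ring
      rw [this]
      exact h _ (S.smul_mem (pow_mem hs 2) _)
    · have : (y ^ (j + 1) • s) ^ 3 = y ^ (j + 1 + 1) • (y ^ (2 * j + 1) • s ^ 3) := by
        rw [smul_pow, smul_smul]; congr 1; ring
      rw [this]
      exact h _ (S.smul_mem (pow_mem hs 3) _)

theorem descent_local [IsFractionRing O K] [IsLocalRing O] [IsNoetherianRing O] [Module.Flat R Q]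
    (hsn : ∀ x : K, x ^ 2 ∈ (1 : Submodule O K) → x ^ 3 ∈ (1 : Submodule O K) →
      x ∈ (1 : Submodule O K))
    (τ : K ⊗[R] Q) (n : ℕ)
    (y₀ : O) (hy₀ : y₀ ≠ 0) (hy₀m : y₀ ∈ IsLocalRing.maximalIdeal O ^ n)
    (hn : ∀ y ∈ IsLocalRing.maximalIdeal O ^ n,
      algebraMap O K y • τ ∈ QN Q ((1 : Submodule O K).restrictScalars R))
    (ha : ∀ (V : ValuationSubring K) (hV : ∀ r : R, algebraMap R K r ∈ V) (c : K), c ≠ 0 →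
      V.valuation c < 1 → c • τ ∈ QN Q (VS V hV) → c • τ ∈ QN Q (VM V hV))
    (η : K ⊗[R] Q) (hη : η ∈ QN Q ((1 : Submodule O K).restrictScalars R))
    (hb : ∀ (V : ValuationSubring K) (hV : ∀ r : R, algebraMap R K r ∈ V),
      (∀ o : O, algebraMap O K o ∈ V) →
      (∀ o : O, V.valuation (algebraMap O K o) < 1 ↔ o ∈ IsLocalRing.maximalIdeal O) →
      τ ∈ QN Q (VS V hV) → τ - η ∈ QN Q (VM V hV)) :
    τ ∈ QN Q ((1 : Submodule O K).restrictScalars R) := by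
  classical
  obtain ⟨M, h1M, hMfg, hτM, hMn, hmin⟩ := descent_min τ n y₀ hy₀ hy₀m hn
  have hMV := descent_le_V τ ha M h1M hMfg hτM hmin
  have hMint : ∀ x ∈ M, IsIntegral O x := fun x hx =>
    isIntegral_of_forall_valuationSubring x fun V hV => hMV V hV x hx
  set S := Algebra.adjoin O (M : Set K) with hS
  have hSfg : S.toSubmodule.FG := by
    obtain ⟨G, hG⟩ := hMfg
    have : S = Algebra.adjoin O (G : Set K) := by
      rw [hS, ← hG, Algebra.adjoin_span]
    rw [this]
    refine fg_adjoin_of_finite G.finite_toSet fun x hx => hMint x ?_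
    rw [← hG]
    exact Submodule.subset_span hx
  -- `m S ⊂ O`
  have hmS1 : ∀ y ∈ IsLocalRing.maximalIdeal O, ∀ s ∈ S, y • s ∈ (1 : Submodule O K) := by
    intro y hy
    obtain ⟨j, hj⟩ := exists_pow_smul_adjoin M y n
      (fun x hx => hMn _ (Ideal.pow_mem_pow hy n) x hx) hSfg
    refine smul_adjoin_mem S hsn y j fun s hs => ?_
    rw [pow_succ', mul_smul]
    exact Submodule.smul_mem _ _ (hj s hs)
  -- `m S ⊂ m`
  have hmS : ∀ y ∈ IsLocalRing.maximalIdeal O, ∀ s ∈ S, ∃ z ∈ IsLocalRing.maximalIdeal O,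
      algebraMap O K z = y • s := by
    intro y hy s hs
    obtain ⟨z, hz⟩ := Submodule.mem_one.mp (hmS1 y hy s hs)
    refine ⟨z, ?_, hz⟩
    by_contra hzm
    have hzu : IsUnit z := by simpa using hzm
    obtain ⟨z', hz'⟩ := hzu.exists_right_inv
    have hy0 : algebraMap O K y ≠ 0 := by
      intro h0
      rw [Algebra.smul_def, h0, zero_mul, map_eq_zero_iff _ (IsFractionRing.injective O K)] at hz
      rw [hz, zero_mul] at hz'
      exact zero_ne_one hz'
    have hinv : (algebraMap O K y)⁻¹ = z' • s := by
      apply inv_eq_of_mul_eq_one_right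
      rw [mul_smul_comm, ← Algebra.smul_def, ← hz,
        Algebra.smul_def, ← map_mul, mul_comm, hz', map_one]
    have hinvS : (algebraMap O K y)⁻¹ ∈ S := by rw [hinv]; exact S.smul_mem hs _
    have h2 := hmS1 y hy _ (pow_mem hinvS 2)
    have h3 : y • (algebraMap O K y)⁻¹ ^ 2 = (algebraMap O K y)⁻¹ := by
      rw [Algebra.smul_def]; field_simp
    rw [h3] at h2
    obtain ⟨w, hw⟩ := Submodule.mem_one.mp h2
    have hyu : IsUnit y := by
      refine IsUnit.of_mul_eq_one w ?_
      apply IsFractionRing.injective O K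
      rw [map_mul, hw, mul_inv_cancel₀ hy0, map_one]
    exact (IsLocalRing.mem_maximalIdeal y).mp hy hyu
  -- the ideal
  let I : Ideal S :=
    { carrier := {s | ∃ z ∈ IsLocalRing.maximalIdeal O, algebraMap O K z = s}
      zero_mem' := ⟨0, zero_mem _, by simp⟩
      add_mem' := by
        rintro a b ⟨z, hz, h⟩ ⟨z', hz', h'⟩
        exact ⟨z + z', add_mem hz hz', by simp [h, h']⟩
      smul_mem' := by
        rintro c x ⟨z, hz, h⟩
        obtain ⟨z', hz', h'⟩ := hmS z hz c c.2
        refine ⟨z', hz', ?_⟩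
        rw [h', Algebra.smul_def, h]
        simp [mul_comm] }
  have hIrad : I.IsRadical := by
    rw [Ideal.isRadical_iff_pow_one_lt 2 one_lt_two]
    rintro s ⟨z, hz, h⟩
    have h2 : (s : K) ^ 2 = algebraMap O K z := by rw [h]; simp
    have hs : (s : K) ∈ (1 : Submodule O K) := by
      refine hsn _ ?_ ?_
      · rw [h2]; exact Submodule.algebraMap_mem z
      · rw [pow_succ, h2, ← Algebra.smul_def]
        exact hmS1 z hz s s.2
    obtain ⟨o, ho⟩ := Submodule.mem_one.mp hs
    refine ⟨o, ?_, ho⟩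
    have : o ^ 2 = z := by
      apply IsFractionRing.injective O K
      rw [map_pow, ho, h2]
    exact (IsLocalRing.maximalIdeal.isMaximal O).isPrime.mem_of_pow_mem 2 (this ▸ hz)
  have hSnoeth : IsNoetherianRing S := by
    have : Module.Finite O S := Module.Finite.iff_fg.mpr hSfg
    exact IsNoetherianRing.of_finite O S
  have hfin := Ideal.finite_minimalPrimes_of_isNoetherianRing S I
  have h1S : (1 : Submodule O K) ≤ S.toSubmodule := by
    intro x hx
    obtain ⟨o, rfl⟩ := Submodule.mem_one.mp hx
    exact S.algebraMap_mem o
  have hMS : M ≤ S.toSubmodule := fun x hx => Algebra.subset_adjoin hx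
  have h1S' : (1 : Submodule O K).restrictScalars R ≤ S.toSubmodule.restrictScalars R :=
    fun x hx => h1S hx
  have hMS' : M.restrictScalars R ≤ S.toSubmodule.restrictScalars R :=
    fun x hx => hMS hx
  have hτS : τ - η ∈ QN Q (S.toSubmodule.restrictScalars R) :=
    sub_mem (QN_mono hMS' hτM) (QN_mono h1S' hη)
  let Np : Ideal S → Submodule R K := fun p =>
    ((p.restrictScalars O).map S.val.toLinearMap).restrictScalars R
  have hNp : ∀ p (x : K), x ∈ Np p ↔ ∃ s ∈ p, (s : K) = x := fun p x => Iff.rfl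
  have key : ∀ p ∈ hfin.toFinset, τ - η ∈ QN Q (Np p) := by
    intro p hp
    rw [Set.Finite.mem_toFinset] at hp
    have hpp : p.IsPrime := hp.1.1
    have hIp : I ≤ p := hp.1.2
    obtain ⟨V, hSV, hVp⟩ := exists_valuationSubring_center S.toSubring p
    have hVO : ∀ o : O, algebraMap O K o ∈ V := fun o => hSV (S.algebraMap_mem o)
    have hVR : ∀ r : R, algebraMap R K r ∈ V := fun r => by
      rw [IsScalarTower.algebraMap_apply R O K]; exact hVO _
    have hcen : ∀ o : O, V.valuation (algebraMap O K o) < 1 ↔ o ∈ IsLocalRing.maximalIdeal O := by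
      intro o
      have h1 : V.valuation (algebraMap O K o) < 1 ↔ algebraMap O S o ∈ p :=
        hVp ⟨algebraMap O K o, S.algebraMap_mem o⟩
      rw [h1]
      constructor
      · intro h
        by_contra hom
        have hu : IsUnit o := by simpa using hom
        exact hpp.ne_top (Ideal.eq_top_of_isUnit_mem _ h (hu.map _))
      · intro h
        exact hIp ⟨o, h, rfl⟩
    have hMVS : M.restrictScalars R ≤ VS V hVR := fun x hx => hMV V hVO x hx
    have hτV : τ ∈ QN Q (VS V hVR) := QN_mono hMVS hτM
    have h4 := hb V hVR hVO hcen hτV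
    refine QN_mono ?_ (QN_inf hτS h4)
    rintro x ⟨hx1, hx2⟩
    exact (hNp p x).mpr ⟨⟨x, hx1⟩, (hVp ⟨x, hx1⟩).mp hx2, rfl⟩
  have h5 := QN_inf hτS (QN_finset_inf hfin.toFinset Np key)
  have h6 : τ - η ∈ QN Q ((1 : Submodule O K).restrictScalars R) := by
    refine QN_mono ?_ h5
    rintro x ⟨hx1, hx2⟩
    have hxI : (⟨x, hx1⟩ : S) ∈ I := by
      rw [← hIrad.radical, ← Ideal.sInf_minimalPrimes, Submodule.mem_sInf]
      intro p hp
      have := (Submodule.mem_finsetInf.mp hx2) p (hfin.mem_toFinset.mpr hp)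
      obtain ⟨s, hs, hsx⟩ := (hNp p x).mp this
      have : s = ⟨x, hx1⟩ := Subtype.ext hsx
      exact this ▸ hs
    obtain ⟨z, _, hz⟩ := hxI
    show x ∈ (1 : Submodule O K)
    rw [← show algebraMap O K z = x from hz]
    exact Submodule.algebraMap_mem z
  have := add_mem h6 hη
  rwa [sub_add_cancel] at this
end Descent
end ResVar

namespace ResVar
universe u v w
set_option linter.unusedSectionVars false

section Descent
variable {R : Type u} [CommRing R] {K : Type u} [Field K] [Algebra R K]
  {Q : Type w} [AddCommGroup Q] [Module R Q]

theorem exists_mul_mem (S : Submonoid R) (s : Finset K)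
    (h : ∀ x ∈ s, ∃ r ∈ S, r • x ∈ (1 : Submodule R K)) :
    ∃ r ∈ S, ∀ x ∈ Submodule.span R (s : Set K), r • x ∈ (1 : Submodule R K) := by
  classical
  choose! r hr1 hr2 using h
  refine ⟨∏ x ∈ s, r x, prod_mem hr1, ?_⟩
  intro x hx
  induction hx using Submodule.span_induction with
  | mem x hx =>
    rw [← Finset.prod_erase_mul _ _ (show x ∈ s from hx), mul_smul]
    exact Submodule.smul_mem _ _ (hr2 x hx)
  | zero => simp
  | add a b _ _ ha hb => rw [smul_add]; exact add_mem ha hb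
  | smul c x _ hx => rw [smul_comm]; exact Submodule.smul_mem _ _ hx

theorem exists_smul_mem_QN (S : Submonoid R) (N : Submodule R K)
    (h : ∀ x ∈ N, ∃ r ∈ S, r • x ∈ (1 : Submodule R K)) (τ : K ⊗[R] Q) (hτ : τ ∈ QN Q N) :
    ∃ r ∈ S, algebraMap R K r • τ ∈ QN Q (1 : Submodule R K) := by
  obtain ⟨s, hs, hτs⟩ := QN_fg hτ
  obtain ⟨r, hr, h1⟩ := exists_mul_mem S s fun x hx => h x (hs x hx)
  refine ⟨r, hr, QN_smul _ ?_ hτs⟩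
  intro x hx
  rw [← Algebra.smul_def]
  exact h1 x hx

theorem QN_one {τ : K ⊗[R] Q} (hτ : τ ∈ QN Q (1 : Submodule R K)) : ∃ ξ : Q, τ = 1 ⊗ₜ ξ := by
  refine QN_induction (p := fun τ => ∃ ξ : Q, τ = 1 ⊗ₜ ξ) ⟨0, by simp⟩ ?_ ?_ hτ
  · intro x hx q
    obtain ⟨r, rfl⟩ := Submodule.mem_one.mp hx
    exact ⟨r • q, by rw [Algebra.algebraMap_eq_smul_one, TensorProduct.smul_tmul]⟩
  · rintro _ _ ⟨a, rfl⟩ ⟨b, rfl⟩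
    exact ⟨a + b, by rw [TensorProduct.tmul_add]⟩

theorem descent [IsDomain R] [IsNoetherianRing R] [IsFractionRing R K] [Module.Flat R Q]
    (hsn : ∀ b c : R, b ^ 3 = c ^ 2 → ∃ a : R, a ^ 2 = b ∧ a ^ 3 = c)
    (τ : K ⊗[R] Q)
    (ha : ∀ (V : ValuationSubring K) (hV : ∀ r : R, algebraMap R K r ∈ V) (c : K), c ≠ 0 →
      V.valuation c < 1 → c • τ ∈ QN Q (VS V hV) → c • τ ∈ QN Q (VM V hV))
    (hb : ∀ P : Ideal R, P.IsPrime → ∃ r ∉ P, ∃ ξ : Q, ∀ (V : ValuationSubring K)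
      (hV : ∀ r : R, algebraMap R K r ∈ V),
      (∀ r' : R, V.valuation (algebraMap R K r') < 1 ↔ r' ∈ P) →
      τ ∈ QN Q (VS V hV) → algebraMap R K r • τ - 1 ⊗ₜ ξ ∈ QN Q (VM V hV)) :
    ∃ ξ : Q, τ = 1 ⊗ₜ ξ := by
  have hinj := IsFractionRing.injective R K
  have hsnK : ∀ x : K, x ^ 2 ∈ (1 : Submodule R K) → x ^ 3 ∈ (1 : Submodule R K) →
      x ∈ (1 : Submodule R K) := by
    intro x h2 h3
    obtain ⟨b, hb⟩ := Submodule.mem_one.mp h2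
    obtain ⟨c, hc⟩ := Submodule.mem_one.mp h3
    obtain ⟨a, hab, hac⟩ := hsn b c (hinj (by rw [map_pow, map_pow, hb, hc]; ring))
    by_cases hx : x = 0
    · rw [hx]; exact zero_mem _
    refine Submodule.mem_one.mpr ⟨a, ?_⟩
    have h4 : algebraMap R K a ^ 2 = x ^ 2 := by rw [← map_pow, hab, hb]
    have h5 : algebraMap R K a ^ 3 = x ^ 3 := by rw [← map_pow, hac, hc]
    rw [pow_succ, h4, pow_succ x 2] at h5
    exact mul_left_cancel₀ (pow_ne_zero 2 hx) h5
  apply QN_one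
  let J : Ideal R :=
    { carrier := {r | algebraMap R K r • τ ∈ QN Q (1 : Submodule R K)}
      zero_mem' := by simp
      add_mem' := by
        intro a b ha hb
        show algebraMap R K (a + b) • τ ∈ QN Q (1 : Submodule R K)
        rw [map_add, add_smul]; exact add_mem ha hb
      smul_mem' := by
        intro c x hx
        show algebraMap R K (c * x) • τ ∈ QN Q (1 : Submodule R K)
        rw [map_mul, mul_smul, algebraMap_smul]
        exact Submodule.smul_mem _ _ hx }
  have hJ0 : ∃ r ∈ J, r ≠ 0 := by
    obtain ⟨r, hr, h⟩ := exists_smul_mem_QN (nonZeroDivisors R) ⊤ (fun x _ => by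
      obtain ⟨a, s, hs, rfl⟩ := IsFractionRing.div_surjective R x
      refine ⟨s, hs, Submodule.mem_one.mpr ⟨a, ?_⟩⟩
      have : algebraMap R K s ≠ 0 := by simpa using nonZeroDivisors.ne_zero hs
      rw [Algebra.smul_def]; field_simp) τ (QN_top τ)
    exact ⟨r, h, nonZeroDivisors.ne_zero hr⟩
  by_contra hcon
  have hJtop : J ≠ ⊤ := by
    intro h
    have h1 : (1 : R) ∈ J := by rw [h]; trivial
    apply hcon
    have h1' : algebraMap R K 1 • τ ∈ QN Q (1 : Submodule R K) := h1
    rwa [map_one, one_smul] at h1'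
  obtain ⟨P, hPmin⟩ := J.nonempty_minimalPrimes hJtop
  have hPp : P.IsPrime := hPmin.1.1
  have hJP : J ≤ P := hPmin.1.2
  let O := Localization.subalgebra.ofField K P.primeCompl P.primeCompl_le_nonZeroDivisors
  have hOmem : ∀ x : K, x ∈ O ↔ ∃ (a s : R) (_ : s ∈ P.primeCompl),
    x = algebraMap R K a * (algebraMap R K s)⁻¹ := fun x => Iff.rfl
  have hOloc : IsLocalization.AtPrime O P :=
    Localization.subalgebra.isLocalization_ofField K P.primeCompl P.primeCompl_le_nonZeroDivisors
  have : IsLocalRing O := IsLocalization.AtPrime.isLocalRing O P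
  have : IsNoetherianRing O := IsLocalization.isNoetherianRing P.primeCompl O inferInstance
  have hne0 : ∀ s ∈ P.primeCompl, algebraMap R K s ≠ 0 := by
    intro s hs h
    have : s = 0 := by simpa using h
    exact hs (this ▸ zero_mem P)
  have hOden : ∀ x ∈ (1 : Submodule O K), ∃ r ∈ P.primeCompl, r • x ∈ (1 : Submodule R K) := by
    intro x hx
    obtain ⟨o, rfl⟩ := Submodule.mem_one.mp hx
    obtain ⟨a, s, hs, h⟩ := (hOmem o).mp o.2
    refine ⟨s, hs, Submodule.mem_one.mpr ⟨a, ?_⟩⟩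
    have h0 := hne0 s hs
    have h' : algebraMap O K o = algebraMap R K a * (algebraMap R K s)⁻¹ := h
    rw [Algebra.smul_def, h']; field_simp
  have hOden' : ∀ x : K, ∀ r ∈ P.primeCompl, r • x ∈ (1 : Submodule R K) →
      x ∈ (1 : Submodule O K) := by
    intro x r hr h
    obtain ⟨a, ha⟩ := Submodule.mem_one.mp h
    have h0 := hne0 r hr
    refine Submodule.mem_one.mpr ⟨⟨x, (hOmem x).mpr ⟨a, r, hr, ?_⟩⟩, rfl⟩
    rw [ha, Algebra.smul_def]; field_simp
  have hsnO : ∀ x : K, x ^ 2 ∈ (1 : Submodule O K) → x ^ 3 ∈ (1 : Submodule O K) →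
      x ∈ (1 : Submodule O K) := by
    intro x h2 h3
    obtain ⟨r, hr, h2'⟩ := hOden _ h2
    obtain ⟨s, hs, h3'⟩ := hOden _ h3
    refine hOden' x (r * s) (mul_mem hr hs) (hsnK _ ?_ ?_)
    · rw [smul_pow, show (r * s) ^ 2 = (r * s ^ 2) * r by ring, mul_smul]
      exact Submodule.smul_mem _ _ h2'
    · rw [smul_pow, show (r * s) ^ 3 = (r ^ 3 * s ^ 2) * s by ring, mul_smul]
      exact Submodule.smul_mem _ _ h3'
  have h1le : (1 : Submodule R K) ≤ (1 : Submodule O K).restrictScalars R := by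
    intro x hx
    obtain ⟨r, rfl⟩ := Submodule.mem_one.mp hx
    exact Submodule.mem_one.mpr ⟨algebraMap R O r, rfl⟩
  let J' : Ideal O :=
    { carrier := {r | algebraMap O K r • τ ∈ QN Q ((1 : Submodule O K).restrictScalars R)}
      zero_mem' := by simp
      add_mem' := by
        intro a b ha hb
        show algebraMap O K (a + b) • τ ∈ QN Q ((1 : Submodule O K).restrictScalars R)
        rw [map_add, add_smul]; exact add_mem ha hb
      smul_mem' := by
        intro c x hx
        show algebraMap O K (c * x) • τ ∈ QN Q ((1 : Submodule O K).restrictScalars R)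
        rw [map_mul, mul_smul]
        refine QN_smul _ ?_ hx
        intro z hz
        rw [← Algebra.smul_def]
        exact Submodule.smul_mem (1 : Submodule O K) _ hz }
  have hJJ' : J.map (algebraMap R O) ≤ J' := by
    rw [Ideal.map_le_iff_le_comap]
    intro r hr
    exact QN_mono h1le hr
  have hmax : IsLocalRing.maximalIdeal O = P.map (algebraMap R O) :=
    (IsLocalization.AtPrime.map_eq_maximalIdeal P O).symm
  have hrad : IsLocalRing.maximalIdeal O ≤ J'.radical := by
    refine le_trans ?_ (Ideal.radical_mono hJJ')
    rw [IsLocalization.AtPrime.radical_map_of_mem_minimalPrimes O P J hPmin, hmax]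
  obtain ⟨n, hn⟩ := Ideal.exists_pow_le_of_le_radical_of_fg_radical hrad (IsNoetherian.noetherian _)
  obtain ⟨r₀, hr₀, hr₀0⟩ := hJ0
  obtain ⟨r, hrP, ξ, hξ⟩ := hb P hPp
  have hr0 := hne0 r hrP
  have hfin : τ ∈ QN Q ((1 : Submodule O K).restrictScalars R) := by
    refine descent_local hsnO τ n (algebraMap R O r₀ ^ n) ?_ ?_ hn ha
      ((algebraMap R K r)⁻¹ • (1 ⊗ₜ ξ)) ?_ ?_
    · apply pow_ne_zero
      intro h
      have : algebraMap O K (algebraMap R O r₀) = 0 := by rw [h, map_zero]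
      rw [← IsScalarTower.algebraMap_apply] at this
      exact hr₀0 (by simpa using this)
    · apply Ideal.pow_mem_pow
      rw [hmax]
      exact Ideal.mem_map_of_mem _ (hJP hr₀)
    · rw [TensorProduct.smul_tmul']
      refine QN_tmul ?_ ξ
      refine hOden' _ r hrP (Submodule.mem_one.mpr ⟨1, ?_⟩)
      rw [Algebra.smul_def, smul_eq_mul, mul_one, mul_inv_cancel₀ hr0, map_one]
    · intro V hV hVO hVm hτV
      have hcen : ∀ r' : R, V.valuation (algebraMap R K r') < 1 ↔ r' ∈ P := by
        intro r'
        rw [IsScalarTower.algebraMap_apply R O K, hVm]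
        exact IsLocalization.AtPrime.to_map_mem_maximal_iff O P r'
      have h1 := hξ V hV hcen hτV
      have h2 : τ - (algebraMap R K r)⁻¹ • (1 ⊗ₜ[R] ξ) =
          (algebraMap R K r)⁻¹ • (algebraMap R K r • τ - 1 ⊗ₜ ξ) := by
        rw [smul_sub, smul_smul, inv_mul_cancel₀ hr0, one_smul]
      rw [h2]
      refine QN_smul _ ?_ h1
      intro x hx
      have h3 : V.valuation x < 1 := hx
      have h4 : V.valuation (algebraMap R K r) = 1 := by
        refine le_antisymm ((V.valuation_le_one_iff _).mpr (hV r)) ?_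
        rw [← not_lt, hcen]
        exact hrP
      show V.valuation _ < 1
      rw [map_mul, map_inv₀, h4, inv_one, one_mul]
      exact h3
  obtain ⟨s, hs, h⟩ := exists_smul_mem_QN P.primeCompl _ hOden τ hfin
  exact hs (hJP h)
end Descent
end ResVar

namespace ResVar
universe u v w
set_option linter.unusedSectionVars false

section Var
variable {m : ℕ} (k : Type u) [CommRing k] {C : Type v} [CommRing C] [Algebra k C]
  (W : Fin m → C)

/-- evaluation at `x` and `W` -/
noncomputable def ev (x : C) : MvPolynomial (Option (Fin m)) k →ₐ[k] C :=
  MvPolynomial.aeval (fun o : Option (Fin m) => o.elim x W)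

/-- `x` is a complementary variable to `W`. -/
def IsVar (x : C) : Prop := Function.Bijective (ev k W x)

variable {k W}

theorem IsVar.equiv {x : C} (h : IsVar k W x) :
    ∃ e : Polynomial (MvPolynomial (Fin m) k) ≃ₐ[k] C, e Polynomial.X = x ∧
      ∀ g, e (Polynomial.C g) = MvPolynomial.aeval W g := by
  refine ⟨(MvPolynomial.optionEquivLeft k (Fin m)).symm.trans (AlgEquiv.ofBijective _ h), ?_, ?_⟩
  · simp [ev]
  · intro g
    induction g using MvPolynomial.induction_on with
    | C a => simp [ev]
    | add p q hp hq => rw [map_add, map_add, map_add, hp, hq]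
    | mul_X p n hp => rw [map_mul, map_mul, map_mul, hp]; simp [ev]

theorem IsVar.of_ringEquiv {x : C} (e : Polynomial (MvPolynomial (Fin m) k) ≃+* C)
    (hX : e Polynomial.X = x) (hC : ∀ g, e (Polynomial.C g) = MvPolynomial.aeval W g) :
    IsVar k W x := by
  have : ⇑(ev k W x) = e ∘ (MvPolynomial.optionEquivLeft k (Fin m)) := by
    funext p
    induction p using MvPolynomial.induction_on with
    | C a => simp [ev, hC]
    | add p q hp hq => 
      simp only [Function.comp_apply] at hp hq ⊢
      rw [map_add, map_add, map_add, hp, hq]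
    | mul_X p n hp => 
      simp only [Function.comp_apply] at hp ⊢
      rw [map_mul, map_mul, map_mul, hp]
      congr 1
      cases n <;> simp [ev, hX, hC]
  rw [IsVar, this]
  exact e.bijective.comp (AlgEquiv.bijective _)

theorem IsVar.aeval_injective {x : C} (h : IsVar k W x) :
    Function.Injective (MvPolynomial.aeval (R := k) W) := by
  obtain ⟨e, -, hC⟩ := h.equiv
  intro a b hab
  rw [← hC, ← hC] at hab
  exact Polynomial.C_injective (e.injective hab)

theorem ev_eq_comp {y : C} (e : Polynomial (MvPolynomial (Fin m) k) ≃ₐ[k] C)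
    (hC : ∀ g, e (Polynomial.C g) = MvPolynomial.aeval W g) (p : MvPolynomial (Option (Fin m)) k) :
    ev k W y p = e ((MvPolynomial.optionEquivLeft k (Fin m) p).comp (e.symm y)) := by
  induction p using MvPolynomial.induction_on with
  | C a => simp [ev, hC]
  | add p q hp hq => rw [map_add, map_add, Polynomial.add_comp, map_add, hp, hq]
  | mul_X p n hp =>
    rw [map_mul, map_mul, Polynomial.mul_comp, map_mul, hp]
    congr 1
    cases n <;> simp [ev, hC]

theorem IsVar.ev_injective [IsDomain k] {x : C} (h : IsVar k W x) (y : C)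
    (hy : y ∉ Set.range (MvPolynomial.aeval (R := k) W)) : Function.Injective (ev k W y) := by
  obtain ⟨e, hX, hC⟩ := h.equiv
  rw [injective_iff_map_eq_zero]
  intro p hp
  rw [ev_eq_comp e hC] at hp
  rw [EmbeddingLike.map_eq_zero_iff, Polynomial.comp_eq_zero_iff] at hp
  rcases hp with hp | ⟨_, hp⟩
  · simpa using hp
  · exfalso
    apply hy
    refine ⟨(e.symm y).coeff 0, ?_⟩
    rw [← hC, ← hp, e.apply_symm_apply]

theorem IsVar.eq_affine [IsDomain k] {x y : C} (h : IsVar k W x) (h' : IsVar k W y) :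
    ∃ a b : MvPolynomial (Fin m) k,
      y = MvPolynomial.aeval W a * x + MvPolynomial.aeval W b := by
  obtain ⟨e, hX, hC⟩ := h.equiv
  obtain ⟨p, hp⟩ := h'.2 x
  rw [ev_eq_comp e hC, ← hX, e.injective.eq_iff] at hp
  have h1 := congrArg Polynomial.natDegree hp
  rw [Polynomial.natDegree_comp, Polynomial.natDegree_X] at h1
  have h2 := Nat.eq_one_of_mul_eq_one_left h1
  refine ⟨(e.symm y).coeff 1, (e.symm y).coeff 0, ?_⟩
  rw [← hC, ← hC, ← hX, ← map_mul, ← map_add, ← Polynomial.eq_X_add_C_of_natDegree_le_one h2.le,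
    e.apply_symm_apply]

theorem IsVar.affine {x : C} (h : IsVar k W x) (c : k) (hc : IsUnit c)
    (g : MvPolynomial (Fin m) k) : IsVar k W (c • x + MvPolynomial.aeval W g) := by
  obtain ⟨e, hX, hC⟩ := h.equiv
  obtain ⟨c, rfl⟩ := hc
  let _ : Invertible (MvPolynomial.C (σ := Fin m) (c : k)) :=
    ((Units.map MvPolynomial.C.toMonoidHom c).invertible)
  refine IsVar.of_ringEquiv
    ((Polynomial.algEquivCMulXAddC (MvPolynomial.C (σ := Fin m) (c : k)) g).toRingEquiv.trans
      e.toRingEquiv) ?_ ?_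
  · simp [hC, hX, Algebra.smul_def]
  · intro g
    simp [hC]

section deriv
variable (D : Derivation k C C)

theorem D_aeval (hD : ∀ i, D (W i) = 0) (g : MvPolynomial (Fin m) k) : D (MvPolynomial.aeval W g) = 0 := by
  induction g using MvPolynomial.induction_on with
  | C a => simp
  | add p q hp hq => rw [map_add, map_add, hp, hq, add_zero]
  | mul_X p n hp => rw [map_mul, Derivation.leibniz, hp]; simp [hD]

theorem D_equiv (hD : ∀ i, D (W i) = 0) {x : C}
    (e : Polynomial (MvPolynomial (Fin m) k) ≃ₐ[k] C)
    (hX : e Polynomial.X = x) (hC : ∀ g, e (Polynomial.C g) = MvPolynomial.aeval W g)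
    (p : Polynomial (MvPolynomial (Fin m) k)) : D (e p) = e p.derivative * D x := by
  induction p using Polynomial.induction_on' with
  | add p q hp hq => rw [map_add, map_add, hp, hq, Polynomial.derivative_add, map_add, add_mul]
  | monomial n a =>
    rw [← Polynomial.C_mul_X_pow_eq_monomial, map_mul, Derivation.leibniz, hC, D_aeval D hD,
      map_pow, hX, Derivation.leibniz_pow, Polynomial.derivative_C_mul_X_pow, map_mul, map_pow, hX,
      hC]
    simp
    ring

theorem IsVar.sub_mem (hD : ∀ i, D (W i) = 0) [IsDomain k] {x y : C}
    (h : IsVar k W x) (h' : IsVar k W y)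
    (hx : D x = 1) (hy : D y = 1) : ∃ g, y - x = MvPolynomial.aeval (R := k) W g := by
  obtain ⟨a, b, hab⟩ := h.eq_affine h'
  have h1 := congrArg D hab
  rw [map_add, Derivation.leibniz, D_aeval D hD, D_aeval D hD, hx, hy] at h1
  refine ⟨b, ?_⟩
  have h2 : MvPolynomial.aeval W a = (1 : C) := by simpa using h1.symm
  rw [hab, h2]; ring

end deriv

theorem IsVar.isUnit_eq {k : Type u} [Field k] [Algebra k C] {x : C} (h : IsVar k W x)
    {z : C} (hz : IsUnit z) :
    ∃ c : k, c ≠ 0 ∧ z = algebraMap k C c := by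
  let E := AlgEquiv.ofBijective _ h
  have h1 : IsUnit (E.symm z) := hz.map E.symm
  obtain ⟨c, hc, h2⟩ := MvPolynomial.isUnit_iff_eq_C_of_isReduced.mp h1
  refine ⟨c, hc.ne_zero, ?_⟩
  rw [← E.apply_symm_apply z, h2]
  simp [E, ev]

end Var

section BaseChange
variable {k : Type u} [CommRing k] {C : Type v} [CommRing C] [Algebra k C]
  {k' : Type w} [CommRing k'] [Algebra k k']

theorem aeval_baseChange {σ : Type*} (W : σ → C) (z : k' ⊗[k] MvPolynomial σ k) :
    (MvPolynomial.aeval (R := k) W).toLinearMap.lTensor k' z =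
      MvPolynomial.aeval (R := k') (fun i => (1 : k') ⊗ₜ[k] W i)
        (MvPolynomial.algebraTensorAlgEquiv k k' z) := by
  induction z with
  | zero => simp
  | add a b ha hb => rw [map_add, map_add, map_add, ha, hb]
  | tmul a p =>
    rw [MvPolynomial.algebraTensorAlgEquiv_tmul, map_smul, MvPolynomial.aeval_map_algebraMap,
      MvPolynomial.aeval_one_tmul, LinearMap.lTensor_tmul, TensorProduct.smul_tmul']
    simp

theorem ev_baseChange {m : ℕ} (W : Fin m → C) (x : C)
    (z : k' ⊗[k] MvPolynomial (Option (Fin m)) k) :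
    (ev k W x).toLinearMap.lTensor k' z =
      ev k' (fun i => (1 : k') ⊗ₜ[k] W i) (1 ⊗ₜ x)
        (MvPolynomial.algebraTensorAlgEquiv k k' z) := by
  have := aeval_baseChange (k' := k') (fun o : Option (Fin m) => o.elim x W) z
  rw [ev, this, ev]
  congr 2
  funext o
  cases o <;> rfl

theorem isVar_baseChange_iff {m : ℕ} (W : Fin m → C) (x : C) :
    IsVar k' (fun i => (1 : k') ⊗ₜ[k] W i) (1 ⊗ₜ x) ↔
      Function.Bijective ((ev k W x).toLinearMap.lTensor k') := by
  have : ⇑((ev k W x).toLinearMap.lTensor k') = ev k' (fun i => (1 : k') ⊗ₜ[k] W i) (1 ⊗ₜ x) ∘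
      (MvPolynomial.algebraTensorAlgEquiv k k') := funext (ev_baseChange W x)
  rw [this, IsVar]
  exact (Function.Bijective.of_comp_iff _ (AlgEquiv.bijective _)).symm

theorem IsVar.baseChange {m : ℕ} {W : Fin m → C} {x : C} (h : IsVar k W x) :
    IsVar k' (fun i => (1 : k') ⊗ₜ[k] W i) (1 ⊗ₜ x) := by
  rw [isVar_baseChange_iff]
  exact (LinearEquiv.lTensor k' (LinearEquiv.ofBijective (ev k W x).toLinearMap h)).bijective

theorem IsVar.map_equiv {m : ℕ} {W : Fin m → C} {x : C} (h : IsVar k W x) {C' : Type*} [CommRing C']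
    [Algebra k C'] (e : C ≃ₐ[k] C') : IsVar k (fun i => e (W i)) (e x) := by
  have : ⇑(ev k (fun i => e (W i)) (e x)) = e ∘ ev k W x := by
    have : ev k (fun i => e (W i)) (e x) = (e : C →ₐ[k] C').comp (ev k W x) := by
      ext o
      cases o <;> simp [ev]
    rw [this]; rfl
  rw [IsVar, this]
  exact e.bijective.comp h

end BaseChange

section Tensor
variable {R : Type u} [CommRing R] {A : Type v} [CommRing A] [Algebra R A]

/-- base change map -/
noncomputable def bc {k k' : Type*} [CommRing k] [CommRing k'] [Algebra R k] [Algebra R k']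
    (A : Type v) [CommRing A] [Algebra R A]
    (f : k →ₐ[R] k') : k ⊗[R] A →ₐ[R] k' ⊗[R] A :=
  Algebra.TensorProduct.map f (AlgHom.id R A)

theorem IsVar.bc {m : ℕ} {W : Fin m → A} {k : Type*} {k' : Type*} [CommRing k] [CommRing k']
    [Algebra R k] [Algebra R k'] (f : k →ₐ[R] k') {x : k ⊗[R] A}
    (h : IsVar k (fun i => (1 : k) ⊗ₜ[R] W i) x) :
    IsVar k' (fun i => (1 : k') ⊗ₜ[R] W i) (bc A f x) := by
  let _ : Algebra k k' := f.toRingHom.toAlgebra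
  have : IsScalarTower R k k' := IsScalarTower.of_algebraMap_eq fun r => (f.commutes r).symm
  have h1 := (h.baseChange (k' := k')).map_equiv
    (Algebra.TensorProduct.cancelBaseChange R k k' k' A)
  have h2 : ∀ x : k ⊗[R] A, Algebra.TensorProduct.cancelBaseChange R k k' k' A (1 ⊗ₜ x) = ResVar.bc A f x := by
    intro x
    induction x with
    | zero => simp
    | add a b ha hb => rw [TensorProduct.tmul_add, map_add, map_add, ha, hb]
    | tmul a b =>
      simp [ResVar.bc, Algebra.smul_def, RingHom.algebraMap_toAlgebra]
  rw [h2] at h1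
  convert h1 using 2 with i
  simp
end Tensor
end ResVar

namespace ResVar
universe u v w
set_option linter.unusedSectionVars false

section Der
variable {R : Type u} [CommRing R] {A : Type v} [CommRing A] [Algebra R A]

/-- base change of a derivation -/
noncomputable def Dk (k : Type*) [CommRing k] [Algebra R k] (D : Derivation R A A) :
    Derivation k (k ⊗[R] A) (k ⊗[R] A) :=
  Derivation.mk' ((D : A →ₗ[R] A).baseChange k) (by
    intro a b
    induction a with
    | zero => simp
    | add x y hx hy =>
      rw [add_mul, map_add, hx, hy, map_add, add_smul, smul_add]; abel
    | tmul x y =>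
      induction b with
      | zero => simp
      | add z w hz hw =>
        rw [mul_add, map_add, hz, hw, map_add, add_smul, smul_add]; abel
      | tmul z w =>
        simp [TensorProduct.tmul_add, mul_comm])

@[simp]
theorem Dk_tmul (k : Type*) [CommRing k] [Algebra R k] (D : Derivation R A A) (c : k) (a : A) :
    Dk k D (c ⊗ₜ a) = c ⊗ₜ D a := rfl

theorem Dk_bc {k k' : Type*} [CommRing k] [CommRing k'] [Algebra R k] [Algebra R k']
    (f : k →ₐ[R] k') (D : Derivation R A A) (z : k ⊗[R] A) :
    Dk k' D (bc A f z) = bc A f (Dk k D z) := by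
  induction z with
  | zero => simp
  | add x y hx hy => simp only [map_add, hx, hy]
  | tmul x y => simp [bc]

variable {ι : Type*} {s : ℕ}

/-- components of the universal derivation -/
noncomputable def del (Θ : (KaehlerDifferential R A × (Fin s → A)) →ₗ[A] (ι → A)) (i : ι) :
    Derivation R A A :=
  (LinearMap.proj i ∘ₗ Θ ∘ₗ LinearMap.inl A _ _).compDer (KaehlerDifferential.D R A)

theorem del_apply (Θ : (KaehlerDifferential R A × (Fin s → A)) →ₗ[A] (ι → A)) (i : ι) (a : A) :
    del Θ i a = Θ (KaehlerDifferential.D R A a, 0) i := rfl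

/-- rows -/
noncomputable def rows {m : ℕ} (k : Type*) [CommRing k] [Algebra R k]
    (Θ : (KaehlerDifferential R A × (Fin s → A)) →ₗ[A] (ι → A)) (W : Fin m → A) (x : k ⊗[R] A) :
    Option (Fin m) ⊕ Fin s → ι → k ⊗[R] A
  | .inl none => fun i => Dk k (del Θ i) x
  | .inl (some j) => fun i => Dk k (del Θ i) (1 ⊗ₜ W j)
  | .inr j => fun i => 1 ⊗ₜ Θ (0, Pi.single j 1) i

theorem rows_span [Finite ι] {m : ℕ} (k : Type*) [CommRing k] [Algebra R k]
    (Θ : (KaehlerDifferential R A × (Fin s → A)) ≃ₗ[A] (ι → A)) (W : Fin m → A) (x : k ⊗[R] A)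
    (hx : IsVar k (fun i => (1 : k) ⊗ₜ[R] W i) x) :
    Submodule.span (k ⊗[R] A) (Set.range (rows k Θ.toLinearMap W x)) = ⊤ := by
  classical
  have := Fintype.ofFinite ι
  set T := Submodule.span (k ⊗[R] A) (Set.range (rows k Θ.toLinearMap W x)) with hT
  have hrow : ∀ r, rows k Θ.toLinearMap W x r ∈ T := fun r => Submodule.subset_span ⟨r, rfl⟩
  have h1 : ∀ z : k ⊗[R] A, (fun i => Dk k (del Θ.toLinearMap i) z) ∈ T := by
    intro z
    obtain ⟨p, rfl⟩ := hx.2 z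
    induction p using MvPolynomial.induction_on with
    | C a =>
      convert zero_mem T using 1
      funext i
      simp [ev]
    | add p q hp hq =>
      convert add_mem hp hq using 1
      funext i
      simp
    | mul_X p n hp =>
      have hn : (fun i => Dk k (del Θ.toLinearMap i)
          (ev k (fun i => (1 : k) ⊗ₜ[R] W i) x (MvPolynomial.X n))) ∈ T := by
        cases n with
        | none => convert hrow (.inl none) using 1; funext i; simp [ev, rows]
        | some j => convert hrow (.inl (some j)) using 1; funext i; simp [ev, rows]
      convert add_mem (T.smul_mem (ev k (fun i => (1 : k) ⊗ₜ[R] W i) x p) hn)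
        (T.smul_mem (ev k (fun i => (1 : k) ⊗ₜ[R] W i) x (MvPolynomial.X n)) hp) using 1
      funext i
      rw [map_mul, Derivation.leibniz]
      rfl
  have hsm : ∀ (a : A) (v : ι → A), (fun i => (1 : k) ⊗ₜ[R] (a • v) i) =
      ((1 : k) ⊗ₜ[R] a) • (fun i => (1 : k) ⊗ₜ[R] v i) := by
    intro a v
    funext i
    simp
  have h2 : ∀ y, (fun i => (1 : k) ⊗ₜ[R] Θ (y, 0) i) ∈ T := by
    intro y
    have hy : y ∈ Submodule.span A (Set.range (KaehlerDifferential.D R A)) := by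
      rw [KaehlerDifferential.span_range_derivation]; trivial
    induction hy using Submodule.span_induction with
    | mem y hy =>
      obtain ⟨a, rfl⟩ := hy
      exact h1 (1 ⊗ₜ a)
    | zero =>
      convert zero_mem T using 1
      funext i
      rw [show ((0 : KaehlerDifferential R A), (0 : Fin s → A)) = 0 from rfl]
      simp
    | add a b _ _ ha hb =>
      convert add_mem ha hb using 1
      funext i
      rw [show (a + b, (0 : Fin s → A)) = (a, 0) + (b, 0) by simp]
      rw [map_add, Pi.add_apply, TensorProduct.tmul_add, Pi.add_apply]
    | smul a y _ hy =>
      have := T.smul_mem ((1 : k) ⊗ₜ[R] a) hy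
      rw [← hsm, ← map_smul] at this
      simpa using this
  have h3 : ∀ y, (fun i => (1 : k) ⊗ₜ[R] Θ y i) ∈ T := by
    rintro ⟨y, c⟩
    have hc : (y, c) = (y, (0 : Fin s → A)) + ∑ j, c j • ((0 : KaehlerDifferential R A), (Pi.single j 1 : Fin s → A)) := by
      refine Prod.ext ?_ ?_
      · simp [Prod.fst_sum]
      · funext i
        simp [Prod.snd_sum, Finset.sum_apply, Pi.single_apply]
    have : (fun i => (1 : k) ⊗ₜ[R] Θ (y, c) i) = (fun i => (1 : k) ⊗ₜ[R] Θ (y, 0) i) +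
        ∑ j, ((1 : k) ⊗ₜ[R] c j) • rows k Θ.toLinearMap W x (.inr j) := by
      funext i
      rw [hc, map_add, map_sum]
      simp only [Pi.add_apply, Finset.sum_apply, map_smul, Pi.smul_apply, TensorProduct.tmul_add,
        TensorProduct.tmul_sum, rows]
      simp
    rw [this]
    exact add_mem (h2 y) (sum_mem fun j _ => T.smul_mem _ (hrow _))
  rw [eq_top_iff]
  intro v _
  have hv : v = ∑ i, v i • (fun i' => (1 : k) ⊗ₜ[R] Θ (Θ.symm (Pi.single i 1)) i') := by
    funext i'
    simp only [LinearEquiv.apply_symm_apply, Finset.sum_apply, Pi.smul_apply, smul_eq_mul]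
    rw [Finset.sum_eq_single i']
    · simp [← Algebra.TensorProduct.one_def]
    · intro b _ hb
      rw [Pi.single_apply, if_neg hb.symm, TensorProduct.tmul_zero, mul_zero]
    · simp
  rw [hv]
  exact sum_mem fun i _ => T.smul_mem _ (h3 _)

theorem isUnit_det_of_span {ι : Type*} [Fintype ι] [DecidableEq ι] {C : Type*} [CommRing C]
    (M : ι → ι → C) (h : Submodule.span C (Set.range M) = ⊤) : IsUnit (Matrix.of M).det := by
  have h1 : ∀ i, ∃ c : ι → C, ∑ j, c j • M j = Pi.single i 1 := by
    intro i
    rw [← Submodule.mem_span_range_iff_exists_fun, h]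
    trivial
  choose N hN using h1
  have : Matrix.of N * Matrix.of M = 1 := by
    ext i j
    have := congrFun (hN i) j
    rw [Matrix.mul_apply, Matrix.one_apply]
    simp only [Finset.sum_apply, Pi.smul_apply, smul_eq_mul, Pi.single_apply] at this
    simpa [eq_comm] using this
  have h2 := congrArg Matrix.det this
  rw [Matrix.det_mul, Matrix.det_one] at h2
  exact IsUnit.of_mul_eq_one_right _ h2

end Der
end ResVar

namespace ResVar
universe u v w
set_option linter.unusedSectionVars false

section Rank
variable {R : Type u} [CommRing R] {A : Type v} [CommRing A] [Algebra R A]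

theorem Dk_del_sum {ι : Type*} {s : ℕ} [Fintype ι] [DecidableEq ι] (k : Type*) [CommRing k] [Algebra R k]
    (Θ : (KaehlerDifferential R A × (Fin s → A)) ≃ₗ[A] (ι → A)) (pd : Derivation k (k ⊗[R] A) (k ⊗[R] A)) :
    ∃ l : ι → k ⊗[R] A, (∀ z, ∑ i, Dk k (del Θ.toLinearMap i) z * l i = pd z) ∧
      ∀ j : Fin s, ∑ i, ((1 : k) ⊗ₜ[R] Θ (0, Pi.single j 1) i) * l i = 0 := by
  let _ : Algebra A (k ⊗[R] A) := Algebra.TensorProduct.rightAlgebra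
  have hsm : ∀ (a : A) (z : k ⊗[R] A), a • z = ((1 : k) ⊗ₜ[R] a) * z := by
    intro a z
    rw [Algebra.smul_def]; rfl
  have : IsScalarTower R A (k ⊗[R] A) := Algebra.TensorProduct.right_isScalarTower
  let d : Derivation R A (k ⊗[R] A) := (pd.restrictScalars R).compAlgebraMap A
  have hd : ∀ a, d a = pd (1 ⊗ₜ a) := fun a => rfl
  let G : (KaehlerDifferential R A × (Fin s → A)) →ₗ[A] (k ⊗[R] A) :=
    d.liftKaehlerDifferential ∘ₗ LinearMap.fst A _ _
  let l : ι → k ⊗[R] A := fun i => G (Θ.symm (Pi.single i 1))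
  have key : ∀ y, ∑ i, ((1 : k) ⊗ₜ[R] Θ y i) * l i = G y := by
    intro y
    have h1 : y = Θ.symm (∑ i, Θ y i • (Pi.single i 1 : ι → A)) := by
      rw [← pi_eq_sum_univ' (Θ y), LinearEquiv.symm_apply_apply]
    conv_rhs => rw [h1, map_sum, map_sum]
    refine Finset.sum_congr rfl fun i _ => ?_
    rw [map_smul, map_smul, hsm]
  refine ⟨l, ?_, ?_⟩
  · intro z
    induction z with
    | zero => simp
    | add a b ha hb => simp only [map_add, add_mul, Finset.sum_add_distrib, ha, hb]
    | tmul c a =>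
      have h2 : c ⊗ₜ[R] a = c • ((1 : k) ⊗ₜ[R] a) := by simp [TensorProduct.smul_tmul']
      rw [h2]
      have h3 := key (KaehlerDifferential.D R A a, 0)
      have h4 : G (KaehlerDifferential.D R A a, 0) = pd (1 ⊗ₜ a) := by
        rw [← hd]; simp [G]
      rw [Derivation.map_smul, ← h4, ← h3, Finset.smul_sum]
      refine Finset.sum_congr rfl fun i _ => ?_
      rw [Derivation.map_smul, Dk_tmul, smul_mul_assoc]
      rfl
  · intro j
    rw [key]
    simp [G]

theorem Dk_del_sum2 {ι : Type*} {s : ℕ} [Fintype ι] [DecidableEq ι] (k : Type*) [CommRing k] [Algebra R k]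
    (Θ : (KaehlerDifferential R A × (Fin s → A)) ≃ₗ[A] (ι → A)) (j' : Fin s) :
    ∃ l : ι → k ⊗[R] A, (∀ z, ∑ i, Dk k (del Θ.toLinearMap i) z * l i = 0) ∧
      ∀ j : Fin s, ∑ i, ((1 : k) ⊗ₜ[R] Θ (0, Pi.single j 1) i) * l i = if j = j' then 1 else 0 := by
  let l : ι → k ⊗[R] A := fun i => (1 : k) ⊗ₜ[R] (Θ.symm (Pi.single i 1)).2 j'
  have key : ∀ y, ∑ i, ((1 : k) ⊗ₜ[R] Θ y i) * l i = 1 ⊗ₜ y.2 j' := by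
    intro y
    have h1 : y = Θ.symm (∑ i, Θ y i • (Pi.single i 1 : ι → A)) := by
      rw [← pi_eq_sum_univ' (Θ y), LinearEquiv.symm_apply_apply]
    conv_rhs => rw [h1, map_sum, Prod.snd_sum, Finset.sum_apply, TensorProduct.tmul_sum]
    refine Finset.sum_congr rfl fun i _ => ?_
    rw [map_smul, Algebra.TensorProduct.tmul_mul_tmul, mul_one]
    rfl
  refine ⟨l, ?_, ?_⟩
  · intro z
    induction z with
    | zero => simp
    | add a b ha hb => simp only [map_add, add_mul, Finset.sum_add_distrib, ha, hb, add_zero]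
    | tmul c a =>
      have h2 : c ⊗ₜ[R] a = c • ((1 : k) ⊗ₜ[R] a) := by simp [TensorProduct.smul_tmul']
      rw [h2]
      have h3 := key (KaehlerDifferential.D R A a, 0)
      have h4 := congrArg (fun z => c • z) h3
      simp only [Pi.zero_apply, TensorProduct.tmul_zero, smul_zero, Finset.smul_sum] at h4
      rw [← h4]
      refine Finset.sum_congr rfl fun i _ => ?_
      rw [Derivation.map_smul, Dk_tmul, smul_mul_assoc]
      rfl
  · intro j
    rw [key]
    simp only [Pi.single_apply, eq_comm (a := j')]
    split_ifs <;> simp [Algebra.TensorProduct.one_def]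

theorem rank_eq {ι : Type*} {s : ℕ} [Fintype ι] {m : ℕ} (k : Type*) [CommRing k] [Algebra R k]
    [Nontrivial (k ⊗[R] A)]
    (Θ : (KaehlerDifferential R A × (Fin s → A)) ≃ₗ[A] (ι → A)) (W : Fin m → A) (x : k ⊗[R] A)
    (hx : IsVar k (fun i => (1 : k) ⊗ₜ[R] W i) x) :
    Fintype.card ι = Fintype.card (Option (Fin m) ⊕ Fin s) := by
  classical
  apply le_antisymm
  · apply card_le_of_surjective (k ⊗[R] A) (Fintype.linearCombination (k ⊗[R] A) (rows k Θ.toLinearMap W x))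
    rw [← LinearMap.range_eq_top, Fintype.range_linearCombination, rows_span k Θ W x hx]
  · let E := AlgEquiv.ofBijective _ hx
    have hEx : E (MvPolynomial.X none) = x := by simp [E, ev]
    have hEW : ∀ j, E (MvPolynomial.X (some j)) = (1 : k) ⊗ₜ[R] W j := by intro j; simp [E, ev]
    let pd : Option (Fin m) → Derivation k (k ⊗[R] A) (k ⊗[R] A) := fun o =>
      Derivation.mk' (E.toLinearMap ∘ₗ (MvPolynomial.pderiv (R := k) o : _ →ₗ[k] _) ∘ₗ E.symm.toLinearMap) (by
        intro a b
        change E (MvPolynomial.pderiv o (E.symm (a * b))) =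
          a • E (MvPolynomial.pderiv o (E.symm b)) + b • E (MvPolynomial.pderiv o (E.symm a))
        simp [Derivation.leibniz])
    have hpd : ∀ o o', pd o (E (MvPolynomial.X o')) = if o' = o then 1 else 0 := by
      intro o o'
      have : pd o (E (MvPolynomial.X o')) = E (MvPolynomial.pderiv o (E.symm (E (MvPolynomial.X o')))) := rfl
      rw [this, AlgEquiv.symm_apply_apply, MvPolynomial.pderiv_X, Pi.single_apply]
      split_ifs <;> simp
    choose l hl hl' using fun o => Dk_del_sum k Θ (pd o)
    have h1 : ∀ (r : Option (Fin m) ⊕ Fin s) (o : Option (Fin m)),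
        ∑ i, rows k Θ.toLinearMap W x r i * l o i = if r = .inl o then 1 else 0 := by
      intro r o
      rcases r with (_ | j) | j
      · have := hpd o none
        rw [hEx, ← hl] at this
        simpa [rows] using this
      · have := hpd o (some j)
        rw [hEW, ← hl] at this
        simpa [rows] using this
      · have := hl' o j
        simpa [rows] using this
    choose l2 hl2 hl2' using fun j => Dk_del_sum2 k Θ j
    have h2 : ∀ (r : Option (Fin m) ⊕ Fin s) (j' : Fin s),
        ∑ i, rows k Θ.toLinearMap W x r i * l2 j' i = if r = .inr j' then 1 else 0 := by
      intro r j'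
      rcases r with (_ | j) | j
      · have := hl2 j' x
        simpa [rows] using this
      · have := hl2 j' (1 ⊗ₜ W j)
        simpa [rows] using this
      · have := hl2' j' j
        simpa [rows] using this
    let L : (ι → k ⊗[R] A) →ₗ[k ⊗[R] A] (Option (Fin m) ⊕ Fin s → k ⊗[R] A) :=
      LinearMap.pi fun r => ∑ i, (Sum.elim l l2 r i) • LinearMap.proj i
    have hL : ∀ v r, L v r = ∑ i, v i * Sum.elim l l2 r i := by
      intro v r
      simp [L, mul_comm]
    have h3 : ∀ r, L (rows k Θ.toLinearMap W x r) = Pi.single r 1 := by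
      intro r
      funext r'
      rw [hL, Pi.single_apply]
      simp only [eq_comm (a := r')]
      rcases r' with o | j
      · exact h1 r o
      · exact h2 r j
    apply card_le_of_surjective (k ⊗[R] A) L
    intro v
    refine ⟨∑ r, v r • rows k Θ.toLinearMap W x r, ?_⟩
    rw [map_sum]
    simp only [map_smul, h3]
    exact (pi_eq_sum_univ' v).symm

theorem exists_derivation {s t m : ℕ}
    (Θ : (KaehlerDifferential R A × (Fin s → A)) ≃ₗ[A] (Fin t → A)) (W : Fin m → A)
    (k₀ : Type*) [CommRing k₀] [Algebra R k₀] [Nontrivial (k₀ ⊗[R] A)] (x₀ : k₀ ⊗[R] A)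
    (hx₀ : IsVar k₀ (fun i => (1 : k₀) ⊗ₜ[R] W i) x₀) :
    ∃ D : Derivation R A A, (∀ i, D (W i) = 0) ∧
      ∀ (k : Type u) [Field k] [Algebra R k] (x : k ⊗[R] A),
        IsVar k (fun i => (1 : k) ⊗ₜ[R] W i) x → IsUnit (Dk k D x) := by
  classical
  have hc := rank_eq k₀ Θ W x₀ hx₀
  let σ : Fin t ≃ (Option (Fin m) ⊕ Fin s) := Fintype.equivOfCardEq hc
  let Θ' : (KaehlerDifferential R A × (Fin s → A)) ≃ₗ[A] (Option (Fin m) ⊕ Fin s → A) :=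
    Θ.trans (LinearEquiv.funCongrLeft A A σ.symm)
  let M0 : Option (Fin m) ⊕ Fin s → Option (Fin m) ⊕ Fin s → A
    | .inl none => fun i => 0
    | .inl (some j) => fun i => del Θ'.toLinearMap i (W j)
    | .inr j => fun i => Θ' (0, Pi.single j 1) i
  let D0 : A →ₗ[R] A := 
    { toFun := fun a => ((Matrix.of M0).updateRow (.inl none) fun i => del Θ'.toLinearMap i a).det
      map_add' := by
        intro a b
        rw [← Matrix.det_updateRow_add]
        congr 2
        funext i
        simp
      map_smul' := by
        intro r a
        have := Matrix.det_updateRow_smul (Matrix.of M0) (.inl none) (algebraMap R A r) fun i => del Θ'.toLinearMap i a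
        rw [RingHom.id_apply, Algebra.smul_def r (Matrix.det _), ← this]
        congr 2
        funext i
        simp [Algebra.smul_def] }
  have hD0 : ∀ a, D0 a = ((Matrix.of M0).updateRow (.inl none) fun i => del Θ'.toLinearMap i a).det := fun a => rfl
  let D : Derivation R A A := Derivation.mk' D0 (by
    intro a b
    rw [hD0, hD0, hD0, smul_eq_mul, smul_eq_mul, ← Matrix.det_updateRow_smul, ← Matrix.det_updateRow_smul,
      ← Matrix.det_updateRow_add]
    congr 2
    funext i
    simp)
  have hD : ∀ a, D a = ((Matrix.of M0).updateRow (.inl none) fun i => del Θ'.toLinearMap i a).det := fun a => rfl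
  refine ⟨D, ?_, ?_⟩
  · intro j
    rw [hD]
    apply Matrix.det_zero_of_row_eq (i := .inl none) (j := .inl (some j)) (by simp)
    funext i
    simp [Matrix.updateRow_apply, M0]
  · intro k _ _ x hx
    have key : ∀ z : k ⊗[R] A, Dk k D z = (Matrix.of (rows k Θ'.toLinearMap W z)).det := by
      have hr : ∀ z, Matrix.of (rows k Θ'.toLinearMap W z) =
          (Matrix.of (rows k Θ'.toLinearMap W 0)).updateRow (.inl none)
            (fun i => Dk k (del Θ'.toLinearMap i) z) := by
        intro z
        ext r i
        rcases r with (_ | j) | j <;> simp [Matrix.updateRow_apply, rows]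
      intro z
      induction z with
      | zero =>
        rw [hr]
        rw [Matrix.det_eq_zero_of_row_eq_zero (.inl none)]
        · simp
        · intro i; simp
      | add a b ha hb =>
        rw [map_add, ha, hb, hr a, hr b, hr (a + b), ← Matrix.det_updateRow_add]
        congr 2
        funext i
        simp
      | tmul c a =>
        have h2 : c ⊗ₜ[R] a = algebraMap k (k ⊗[R] A) c * ((1 : k) ⊗ₜ[R] a) := by simp
        have h3 : Dk k D (c ⊗ₜ[R] a) = algebraMap k (k ⊗[R] A) c * ((1 : k) ⊗ₜ[R] D a) := by simp
        have h4 : (1 : k) ⊗ₜ[R] D a = (Matrix.of (rows k Θ'.toLinearMap W (1 ⊗ₜ a))).det := by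
          have := RingHom.map_det (Algebra.TensorProduct.includeRight : A →ₐ[R] k ⊗[R] A).toRingHom
            ((Matrix.of M0).updateRow (.inl none) fun i => del Θ'.toLinearMap i a)
          rw [← hD] at this
          refine this.trans ?_
          congr 1
          ext r i
          rcases r with (_ | j) | j <;> simp [Matrix.updateRow_apply, rows, M0]
        rw [h3, h4, hr, hr (c ⊗ₜ a), ← Matrix.det_updateRow_smul]
        congr 2
        funext i
        simp
    rw [key]
    exact isUnit_det_of_span _ (rows_span k Θ' W x hx)

end Rank
end ResVar

namespace ResVar
universe u v w
set_option linter.unusedSectionVars false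

section Fib
variable {R : Type u} [CommRing R] {A : Type v} [CommRing A] [Algebra R A]

theorem isVar_of_fiber {m : ℕ} {W : Fin m → A} (hW : AlgebraicIndependent R W)
    (k : Type*) [CommRing k] [Algebra R k]
    (e : (k ⊗[R] A) ≃+* MvPolynomial (Fin 1) (k ⊗[R] Algebra.adjoin R (Set.range W)))
    (he : ∀ z, e (Algebra.TensorProduct.map (AlgHom.id R k) (Algebra.adjoin R (Set.range W)).val z) =
      MvPolynomial.C z) : ∃ x, IsVar k (fun i => (1 : k) ⊗ₜ[R] W i) x := by
  let φ : MvPolynomial (Fin m) k ≃ₐ[k] k ⊗[R] Algebra.adjoin R (Set.range W) :=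
    (MvPolynomial.algebraTensorAlgEquiv R k).symm.trans
      (Algebra.TensorProduct.congr AlgEquiv.refl hW.aevalEquiv)
  let E := ((Polynomial.mapEquiv φ.toRingEquiv).trans
    (MvPolynomial.uniqueAlgEquiv (k ⊗[R] Algebra.adjoin R (Set.range W)) (Fin 1)).symm.toRingEquiv).trans e.symm
  refine ⟨E Polynomial.X, IsVar.of_ringEquiv E rfl ?_⟩
  intro g
  have h1 : E (Polynomial.C g) = e.symm (MvPolynomial.C (φ g)) := by
    simp [E]
  rw [h1, ← he, e.symm_apply_apply]
  clear h1
  induction g using MvPolynomial.induction_on with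
  | C a =>
    have : φ (MvPolynomial.C a) = a ⊗ₜ 1 := by
      exact φ.commutes a
    rw [this]
    simp
  | add p q hp hq => simp only [map_add] at hp hq ⊢; rw [hp, hq]
  | mul_X p n hp =>
    simp only [map_mul] at hp ⊢
    rw [hp]
    congr 1
    simp [φ]


theorem IsVar.normalize {m : ℕ} {W : Fin m → A} {k : Type u} [Field k] [Algebra R k]
    (D : Derivation R A A) {x : k ⊗[R] A} (hx : IsVar k (fun i => (1 : k) ⊗ₜ[R] W i) x)
    (hu : IsUnit (Dk k D x)) :
    ∃ y, IsVar k (fun i => (1 : k) ⊗ₜ[R] W i) y ∧ Dk k D y = 1 := by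
  obtain ⟨c, hc, h⟩ := hx.isUnit_eq hu
  refine ⟨_, hx.affine c⁻¹ (isUnit_iff_ne_zero.mpr (inv_ne_zero hc)) 0, ?_⟩
  rw [map_zero, add_zero, Derivation.map_smul, h, Algebra.algebraMap_eq_smul_one, smul_smul,
    inv_mul_cancel₀ hc, one_smul]

theorem mkQ_lTensor_eq_zero {m : ℕ} (W : Fin m → A) (k : Type*) [CommRing k] [Algebra R k]
    (z : k ⊗[R] A) :
    (LinearMap.range (MvPolynomial.aeval (R := R) W).toLinearMap).mkQ.lTensor k z = 0 ↔
      ∃ g, z = MvPolynomial.aeval (R := k) (fun i => (1 : k) ⊗ₜ[R] W i) g := by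
  have h := lTensor_exact k (f := (MvPolynomial.aeval (R := R) W).toLinearMap)
    (g := (LinearMap.range (MvPolynomial.aeval (R := R) W).toLinearMap).mkQ)
    (LinearMap.exact_iff.mpr (by simp)) (Submodule.mkQ_surjective _)
  rw [h z]
  constructor
  · rintro ⟨p, rfl⟩
    exact ⟨_, aeval_baseChange W p⟩
  · rintro ⟨g, rfl⟩
    refine ⟨(MvPolynomial.algebraTensorAlgEquiv R k).symm g, ?_⟩
    rw [aeval_baseChange, AlgEquiv.apply_symm_apply]

theorem Dk_W {m : ℕ} {W : Fin m → A} (k : Type*) [CommRing k] [Algebra R k]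
    {D : Derivation R A A} (hD : ∀ i, D (W i) = 0) (i : Fin m) : Dk k D ((1 : k) ⊗ₜ[R] W i) = 0 := by
  simp [hD]

theorem flat_Q [IsNoetherianRing R] [Module.Flat R A] {m : ℕ} {W : Fin m → A}
    (hvar : ∀ (P : Ideal R) (_ : P.IsPrime), ∃ x : P.ResidueField ⊗[R] A,
      IsVar P.ResidueField (fun i => (1 : P.ResidueField) ⊗ₜ[R] W i) x) :
    Module.Flat R (A ⧸ LinearMap.range (MvPolynomial.aeval (R := R) W).toLinearMap) := by
  apply flat_coker
  intro P hP
  refine ⟨P.ResidueField, inferInstance, inferInstance, P.ker_algebraMap_residueField, ?_⟩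
  obtain ⟨x, hx⟩ := hvar P hP
  have := hx.aeval_injective
  have h2 : ⇑((MvPolynomial.aeval (R := R) W).toLinearMap.lTensor P.ResidueField) =
      MvPolynomial.aeval (R := P.ResidueField) (fun i => (1 : P.ResidueField) ⊗ₜ[R] W i) ∘
        MvPolynomial.algebraTensorAlgEquiv R P.ResidueField := funext (aeval_baseChange W)
  rw [h2]
  exact this.comp (AlgEquiv.injective _)

theorem isVar_of_fibers [IsNoetherianRing R] [Module.Flat R A] {m : ℕ} {W : Fin m → A} (s : A)
    (h : ∀ P : Ideal R, P.IsPrime → ∃ (k : Type u) (_ : Field k) (_ : Algebra R k),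
      RingHom.ker (algebraMap R k) = P ∧ IsVar k (fun i => (1 : k) ⊗ₜ[R] W i) (1 ⊗ₜ s)) :
    IsVar R W s := by
  have := bijective_of_fibers (ev R W s).toLinearMap (by
    intro P hP
    obtain ⟨k, hk, hk', h1, h2⟩ := h P hP
    exact ⟨k, hk, hk', h1, (isVar_baseChange_iff W s).mp h2⟩)
  exact this

theorem exists_antideriv {S : Type*} [CommRing S] [Algebra ℚ S] (p : Polynomial S) :
    ∃ q : Polynomial S, q.derivative = p := by
  induction p using Polynomial.induction_on' with
  | add p q hp hq =>
    obtain ⟨a, rfl⟩ := hp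
    obtain ⟨b, rfl⟩ := hq
    exact ⟨a + b, by simp⟩
  | monomial n a =>
    refine ⟨Polynomial.monomial (n + 1) ((((n : ℚ) + 1)⁻¹) • a), ?_⟩
    rw [Polynomial.derivative_monomial]
    congr 1
    have : (((n : ℚ) + 1)⁻¹) • a * ((n + 1 : ℕ) : S) = ((((n : ℚ) + 1)⁻¹) * ((n : ℚ) + 1)) • a := by
      rw [mul_smul, smul_mul_assoc]
      congr 1
      rw [Algebra.smul_def]
      simp [mul_comm]
    rw [this, inv_mul_cancel₀ (by positivity), one_smul]

theorem rat_case [IsNoetherianRing R] [Module.Flat R A] [Algebra ℚ R] {m : ℕ} {W : Fin m → A}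
    (hvar : ∀ (P : Ideal R) (_ : P.IsPrime), ∃ x : P.ResidueField ⊗[R] A,
      IsVar P.ResidueField (fun i => (1 : P.ResidueField) ⊗ₜ[R] W i) x)
    (D : Derivation R A A) (hDW : ∀ i, D (W i) = 0)
    (hu : ∀ (k : Type u) [Field k] [Algebra R k] (x : k ⊗[R] A),
        IsVar k (fun i => (1 : k) ⊗ₜ[R] W i) x → IsUnit (Dk k D x)) :
    ∃ s, IsVar R W s := by
  have hflat := flat_Q hvar
  have hker : ∀ (P : Ideal R) (_ : P.IsPrime), ∃ x : P.ResidueField ⊗[R] A,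
      IsVar P.ResidueField (fun i => (1 : P.ResidueField) ⊗ₜ[R] W i) x ∧
      Dk P.ResidueField D x = 1 ∧ (∀ z, Dk P.ResidueField D z = 0 → ∃ g, z =
        MvPolynomial.aeval (R := P.ResidueField) (fun i => (1 : P.ResidueField) ⊗ₜ[R] W i) g) ∧
      Function.Surjective (Dk P.ResidueField D) := by
    intro P hP
    obtain ⟨x, hx⟩ := hvar P hP
    obtain ⟨y, hy, hDy⟩ := hx.normalize D (hu _ x hx)
    obtain ⟨e, hX, hC⟩ := hy.equiv
    have hDe := D_equiv (Dk P.ResidueField D) (Dk_W _ hDW) e hX hC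
    let _ : Algebra ℚ P.ResidueField := Algebra.compHom _ (algebraMap ℚ R)
    have : CharZero P.ResidueField := algebraRat.charZero _
    refine ⟨y, hy, hDy, ?_, ?_⟩
    · intro z hz
      obtain ⟨p, rfl⟩ := e.surjective z
      rw [hDe, hDy, mul_one, EmbeddingLike.map_eq_zero_iff] at hz
      refine ⟨p.coeff 0, ?_⟩
      rw [← hC, ← Polynomial.eq_C_of_derivative_eq_zero hz]
    · intro z
      obtain ⟨p, rfl⟩ := e.surjective z
      obtain ⟨q, rfl⟩ := exists_antideriv p
      exact ⟨e q, by rw [hDe, hDy, mul_one]⟩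
  let Db : (A ⧸ LinearMap.range (MvPolynomial.aeval (R := R) W).toLinearMap) →ₗ[R] A :=
    Submodule.liftQ _ (D : A →ₗ[R] A) (by
      rintro _ ⟨g, rfl⟩
      exact D_aeval D hDW g)
  have hDb : ∀ (k : Type u) [Field k] [Algebra R k] (z : k ⊗[R] A), Db.lTensor k
      ((LinearMap.range (MvPolynomial.aeval (R := R) W).toLinearMap).mkQ.lTensor k z) = Dk k D z := by
    intro k _ _ z
    induction z with
    | zero => simp
    | add a b ha hb => simp only [map_add, ha, hb]
    | tmul a b => rfl
  have hbij : Function.Bijective Db := by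
    apply bijective_of_fibers
    intro P hP
    refine ⟨P.ResidueField, inferInstance, inferInstance, P.ker_algebraMap_residueField, ?_⟩
    obtain ⟨x, hx, hDx, h1, h2⟩ := hker P hP
    constructor
    · rw [injective_iff_map_eq_zero]
      intro z hz
      obtain ⟨z, rfl⟩ := LinearMap.lTensor_surjective P.ResidueField (Submodule.mkQ_surjective _) z
      rw [hDb] at hz
      exact (mkQ_lTensor_eq_zero W _ z).mpr (h1 z hz)
    · intro z
      obtain ⟨y, rfl⟩ := h2 z
      exact ⟨_, hDb _ y⟩
  obtain ⟨sb, hs⟩ := hbij.2 1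
  obtain ⟨s, rfl⟩ := Submodule.mkQ_surjective _ sb
  have hs : D s = 1 := hs
  refine ⟨s, isVar_of_fibers s ?_⟩
  intro P hP
  refine ⟨P.ResidueField, inferInstance, inferInstance, P.ker_algebraMap_residueField, ?_⟩
  obtain ⟨x, hx, hDx, h1, h2⟩ := hker P hP
  obtain ⟨g, hg⟩ := h1 (1 ⊗ₜ s - x) (by
    rw [map_sub, hDx, Dk_tmul, hs, Algebra.TensorProduct.one_def, sub_self])
  have := hx.affine 1 isUnit_one g
  rw [← hg, one_smul, add_sub_cancel] at this
  exact this

end Fib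
end ResVar

namespace ResVar
universe u v w
set_option linter.unusedSectionVars false

section Val
variable {R : Type u} [CommRing R] {A : Type v} [CommRing A] [Algebra R A]

theorem bc_ev {m : ℕ} {W : Fin m → A} {k k' : Type*} [CommRing k] [CommRing k']
    [Algebra R k] [Algebra R k'] (φ : k →ₐ[R] k') (f : k ⊗[R] A) (q : MvPolynomial (Option (Fin m)) k) :
    bc A φ (ev k (fun i => (1 : k) ⊗ₜ[R] W i) f q) =
      ev k' (fun i => (1 : k') ⊗ₜ[R] W i) (bc A φ f) (MvPolynomial.map (φ : k →+* k') q) := by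
  induction q using MvPolynomial.induction_on with
  | C a => simp [ev, bc]
  | add p q hp hq => simp only [map_add, hp, hq]
  | mul_X p n hp =>
    rw [map_mul, map_mul, map_mul, map_mul, hp]
    congr 1
    cases n <;> simp [ev, bc]

theorem bc_aeval {m : ℕ} {W : Fin m → A} {k k' : Type*} [CommRing k] [CommRing k']
    [Algebra R k] [Algebra R k'] (φ : k →ₐ[R] k') (q : MvPolynomial (Fin m) k) :
    bc A φ (MvPolynomial.aeval (R := k) (fun i => (1 : k) ⊗ₜ[R] W i) q) =
      MvPolynomial.aeval (R := k') (fun i => (1 : k') ⊗ₜ[R] W i) (MvPolynomial.map (φ : k →+* k') q) := by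
  induction q using MvPolynomial.induction_on with
  | C a => simp [bc]
  | add p q hp hq => simp only [map_add, hp, hq]
  | mul_X p n hp =>
    rw [map_mul, map_mul, map_mul, map_mul, hp]
    congr 1
    simp [bc]

theorem bc_smul {k k' : Type*} [CommRing k] [CommRing k']
    [Algebra R k] [Algebra R k'] (φ : k →ₐ[R] k') (c : k) (z : k ⊗[R] A) :
    bc A φ (c • z) = φ c • bc A φ z := by
  induction z with
  | zero => simp
  | add a b ha hb => simp only [map_add, smul_add, ha, hb]
  | tmul a b => simp [bc, TensorProduct.smul_tmul']

theorem bc_injective [Module.Flat R A] {k k' : Type*} [CommRing k] [CommRing k']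
    [Algebra R k] [Algebra R k'] (φ : k →ₐ[R] k') (h : Function.Injective φ) :
    Function.Injective (bc A φ) :=
  Module.Flat.rTensor_preserves_injective_linearMap (M := A) φ.toLinearMap h

theorem bc_surjective {k k' : Type*} [CommRing k] [CommRing k']
    [Algebra R k] [Algebra R k'] (φ : k →ₐ[R] k') (h : Function.Surjective φ) :
    Function.Surjective (bc A φ) :=
  LinearMap.rTensor_surjective A (g := φ.toLinearMap) h

variable {V K : Type u} [CommRing V] [IsDomain V] [ValuationRing V] [Field K] [Algebra V K]
  [IsFractionRing V K]

theorem exists_content {σ : Type*} (q : MvPolynomial σ K) (hq : q ≠ 0) :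
    ∃ (w : K) (q₀ : MvPolynomial σ V), w ≠ 0 ∧ q = w • MvPolynomial.map (algebraMap V K) q₀ ∧
      ∃ d, q₀.coeff d = 1 := by
  obtain ⟨d, hd, hmax⟩ := Finset.exists_max_image q.support
    (fun d => ValuationRing.valuation V K (q.coeff d)) (MvPolynomial.support_nonempty.mpr hq)
  have hw : q.coeff d ≠ 0 := MvPolynomial.mem_support_iff.mp hd
  set w := q.coeff d with hw'
  have hc : ∀ d', ∃ v : V, algebraMap V K v = w⁻¹ * q.coeff d' := by
    intro d'
    apply (ValuationRing.mem_integer_iff V K _).mp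
    rw [Valuation.mem_integer_iff, map_mul, map_inv₀]
    by_cases hd' : d' ∈ q.support
    · refine inv_mul_le_one_of_le₀ (hmax d' hd') zero_le
    · rw [MvPolynomial.notMem_support_iff.mp hd']
      simp
  have : w⁻¹ • q ∈ Set.range (MvPolynomial.map (σ := σ) (algebraMap V K)) := by
    rw [MvPolynomial.mem_range_map_iff_coeffs_subset]
    intro c hc'
    obtain ⟨d', hd', rfl⟩ := MvPolynomial.mem_coeffs_iff.mp hc'
    rw [MvPolynomial.coeff_smul]
    exact hc d'
  obtain ⟨q₀, hq₀⟩ := this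
  refine ⟨w, q₀, hw, ?_, d, ?_⟩
  · rw [hq₀, smul_smul, mul_inv_cancel₀ hw, one_smul]
  · apply IsFractionRing.injective V K
    rw [← MvPolynomial.coeff_map, hq₀, MvPolynomial.coeff_smul, smul_eq_mul, map_one, inv_mul_cancel₀ hw]

theorem isVar_residue [Module.Flat R A] [Algebra R V] [Algebra R K] [IsScalarTower R V K] {m : ℕ} {W : Fin m → A}
    (f : V ⊗[R] A)
    (hf : IsVar K (fun i => (1 : K) ⊗ₜ[R] W i) (bc A (IsScalarTower.toAlgHom R V K) f))
    (hn : ¬ ∃ g, bc A (IsScalarTower.toAlgHom R V (IsLocalRing.ResidueField V)) f =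
      MvPolynomial.aeval (R := IsLocalRing.ResidueField V)
        (fun i => (1 : IsLocalRing.ResidueField V) ⊗ₜ[R] W i) g)
    (hk : ∃ x, IsVar (IsLocalRing.ResidueField V) (fun i => (1 : IsLocalRing.ResidueField V) ⊗ₜ[R] W i) x) :
    IsVar (IsLocalRing.ResidueField V) (fun i => (1 : IsLocalRing.ResidueField V) ⊗ₜ[R] W i)
      (bc A (IsScalarTower.toAlgHom R V (IsLocalRing.ResidueField V)) f) := by
  set iK := IsScalarTower.toAlgHom R V K with hiK
  set ik := IsScalarTower.toAlgHom R V (IsLocalRing.ResidueField V) with hik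
  have hiKinj : Function.Injective (bc A iK) := bc_injective _ (IsFractionRing.injective V K)
  obtain ⟨x, hx⟩ := hk
  have hinj := hx.ev_injective (bc A ik f) (by
    rintro ⟨g, hg⟩
    exact hn ⟨g, hg.symm⟩)
  refine ⟨hinj, ?_⟩
  intro hb
  obtain ⟨h, rfl⟩ := bc_surjective (A := A) ik IsLocalRing.residue_surjective hb
  obtain ⟨q, hq⟩ := hf.2 (bc A iK h)
  by_cases hq0 : q = 0
  · refine ⟨0, ?_⟩
    rw [hq0, map_zero] at hq
    have : h = 0 := hiKinj (by rw [← hq, map_zero])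
    rw [this, map_zero, map_zero]
  obtain ⟨w, q₀, hw, rfl, d, hd⟩ := exists_content (V := V) q hq0
  have hq₁ : w • bc A iK (ev V (fun i => (1 : V) ⊗ₜ[R] W i) f q₀) = bc A iK h := by
    rw [← hq, bc_ev, map_smul]
    rfl
  rcases ValuationRing.isInteger_or_isInteger V w with ⟨v, hv⟩ | ⟨v, hv⟩
  · have : h = v • ev V (fun i => (1 : V) ⊗ₜ[R] W i) f q₀ := by
      apply hiKinj
      rw [← hq₁, bc_smul, ← hv]
      rfl
    rw [this, ← map_smul, bc_ev]
    exact ⟨_, rfl⟩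
  · have h1 : v • h = ev V (fun i => (1 : V) ⊗ₜ[R] W i) f q₀ := by
      apply hiKinj
      rw [bc_smul, ← hq₁, smul_smul]
      have : iK v = w⁻¹ := hv
      rw [this, inv_mul_cancel₀ hw, one_smul]
    by_cases hvu : IsUnit v
    · obtain ⟨v, rfl⟩ := hvu
      have : h = (↑v⁻¹ : V) • ev V (fun i => (1 : V) ⊗ₜ[R] W i) f q₀ := by
        rw [← h1, smul_smul, Units.inv_mul, one_smul]
      rw [this, ← map_smul, bc_ev]
      exact ⟨_, rfl⟩
    · exfalso
      have h2 := congrArg (bc A ik) h1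
      have h3 : ik v = 0 := (IsLocalRing.residue_eq_zero_iff v).mpr hvu
      rw [bc_smul, h3, zero_smul, bc_ev] at h2
      have h4 := hinj (h2.symm.trans (map_zero _).symm)
      have h5 := congrArg (MvPolynomial.coeff d) h4
      rw [MvPolynomial.coeff_map, hd] at h5
      simp at h5

end Val
end ResVar

namespace ResVar
universe u v w
set_option linter.unusedSectionVars false

section Semi
variable {R : Type u} [CommRing R] {A : Type v} [CommRing A] [Algebra R A]

/-- quotient by the subalgebra generated by `W` -/
abbrev QW (R : Type u) [CommRing R] {A : Type v} [CommRing A] [Algebra R A] {m : ℕ} (W : Fin m → A) :=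
  A ⧸ LinearMap.range (MvPolynomial.aeval (R := R) W).toLinearMap

/-- projection -/
noncomputable def pr (k : Type*) [CommRing k] [Algebra R k] {m : ℕ} (W : Fin m → A) :
    k ⊗[R] A →ₗ[k] k ⊗[R] QW R W :=
  (LinearMap.range (MvPolynomial.aeval (R := R) W).toLinearMap).mkQ.baseChange k

theorem pr_tmul (k : Type*) [CommRing k] [Algebra R k] {m : ℕ} (W : Fin m → A) (c : k) (a : A) :
    pr k W (c ⊗ₜ a) = c ⊗ₜ (LinearMap.range (MvPolynomial.aeval (R := R) W).toLinearMap).mkQ a := rfl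

theorem pr_eq_zero (k : Type*) [CommRing k] [Algebra R k] {m : ℕ} (W : Fin m → A) (z : k ⊗[R] A) :
    pr k W z = 0 ↔ ∃ g, z = MvPolynomial.aeval (R := k) (fun i => (1 : k) ⊗ₜ[R] W i) g :=
  mkQ_lTensor_eq_zero W k z

variable {m : ℕ} {W : Fin m → A} {K : Type u} [Field K] [Algebra R K]

section V
variable (V : ValuationSubring K) [Algebra R V] [IsScalarTower R V K] (hV : ∀ r : R, algebraMap R K r ∈ V)

theorem lift_VS {y : K ⊗[R] QW R W} (hy : y ∈ QN (QW R W) (VS V hV)) :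
    ∃ f : V ⊗[R] A, pr K W (bc A (IsScalarTower.toAlgHom R V K) f) = y := by
  refine QN_induction (p := fun y => ∃ f : V ⊗[R] A,
    pr K W (bc A (IsScalarTower.toAlgHom R V K) f) = y) ⟨0, by simp⟩ ?_ ?_ hy
  · intro x hx q
    obtain ⟨a, rfl⟩ := Submodule.mkQ_surjective _ q
    exact ⟨(⟨x, hx⟩ : V) ⊗ₜ a, rfl⟩
  · rintro _ _ ⟨f, rfl⟩ ⟨g, rfl⟩
    exact ⟨f + g, by simp⟩

theorem mem_VM [Module.Flat R A] (f : V ⊗[R] A)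
    (h : ∃ g, bc A (IsScalarTower.toAlgHom R V (IsLocalRing.ResidueField V)) f =
      MvPolynomial.aeval (R := IsLocalRing.ResidueField V)
        (fun i => (1 : IsLocalRing.ResidueField V) ⊗ₜ[R] W i) g) :
    pr K W (bc A (IsScalarTower.toAlgHom R V K) f) ∈ QN (QW R W) (VM V hV) := by
  obtain ⟨g, hg⟩ := h
  obtain ⟨g, rfl⟩ := MvPolynomial.map_surjective
    (IsScalarTower.toAlgHom R V (IsLocalRing.ResidueField V) : V →+* IsLocalRing.ResidueField V)
    IsLocalRing.residue_surjective g
  rw [← bc_aeval, ← sub_eq_zero, ← map_sub] at hg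
  have h1 : pr K W (bc A (IsScalarTower.toAlgHom R V K) f) =
      pr K W (bc A (IsScalarTower.toAlgHom R V K)
        (f - MvPolynomial.aeval (R := V) (fun i => (1 : V) ⊗ₜ[R] W i) g)) := by
    rw [map_sub, map_sub, bc_aeval, (pr_eq_zero K W _).mpr ⟨_, rfl⟩, sub_zero]
  rw [h1]
  obtain ⟨t, ht⟩ := exists_of_rTensor_eq_zero
    (IsScalarTower.toAlgHom R V (IsLocalRing.ResidueField V)).toLinearMap _ hg
  rw [← ht]
  clear ht h1 hg
  induction t with
  | zero => simp
  | add a b ha hb => simp only [map_add]; exact add_mem ha hb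
  | tmul x a =>
    have h2 : (x : V) ∈ IsLocalRing.maximalIdeal V := (IsLocalRing.residue_eq_zero_iff _).mp x.2
    have h3 : V.valuation ((x : V) : K) < 1 := (V.valuation_lt_one_iff _).mp h2
    exact QN_tmul (N := VM V hV) h3 _

theorem ker_residue (P : Ideal R) (h : ∀ r', V.valuation (algebraMap R K r') < 1 ↔ r' ∈ P) :
    RingHom.ker (algebraMap R (IsLocalRing.ResidueField V)) = P := by
  ext r
  rw [← h, RingHom.mem_ker, IsScalarTower.algebraMap_apply R V (IsLocalRing.ResidueField V),
    IsScalarTower.algebraMap_apply R V K]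
  exact (IsLocalRing.residue_eq_zero_iff _).trans (V.valuation_lt_one_iff _)

end V

theorem exists_residue_map (P : Ideal R) [P.IsPrime] (k : Type*) [Field k] [Algebra R k]
    (h : RingHom.ker (algebraMap R k) = P) : Nonempty (P.ResidueField →ₐ[R] k) := by
  refine ⟨Ideal.ResidueField.liftₐ P (Algebra.ofId R k) ?_ ?_⟩
  · exact h.ge
  · intro r hr
    have : algebraMap R k r ≠ 0 := fun h0 => hr (h ▸ (RingHom.mem_ker.mpr h0))
    exact isUnit_iff_ne_zero.mpr this

theorem exists_smul_eq (P : Ideal R) [P.IsPrime] (z : P.ResidueField ⊗[R] A) :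
    ∃ r ∉ P, ∃ a : A, r • z = 1 ⊗ₜ a := by
  induction z with
  | zero => exact ⟨1, P.one_notMem, 0, by simp⟩
  | add x y hx hy =>
    obtain ⟨r, hr, a, ha⟩ := hx
    obtain ⟨r', hr', a', ha'⟩ := hy
    refine ⟨r * r', P.primeCompl.mul_mem hr hr', r' • a + r • a', ?_⟩
    rw [smul_add, mul_comm, mul_smul, ha, mul_comm, mul_smul, ha', TensorProduct.tmul_add,
      TensorProduct.tmul_smul, TensorProduct.tmul_smul]
  | tmul c a =>
    obtain ⟨⟨b, r⟩, hbr⟩ := IsLocalization.surj (nonZeroDivisors (R ⧸ P)) c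
    obtain ⟨b, rfl⟩ := Ideal.Quotient.mk_surjective b
    obtain ⟨r, hr⟩ := r
    obtain ⟨r, rfl⟩ := Ideal.Quotient.mk_surjective r
    refine ⟨r, ?_, b • a, ?_⟩
    · intro h
      exact nonZeroDivisors.ne_zero hr (Ideal.Quotient.eq_zero_iff_mem.mpr h)
    · have h1 : r • c = b • (1 : P.ResidueField) := by
        rw [Algebra.smul_def, mul_comm, Algebra.smul_def, mul_one]
        exact hbr
      rw [TensorProduct.smul_tmul', h1, TensorProduct.smul_tmul]

end Semi
end ResVar

namespace ResVar
universe u v w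
set_option linter.unusedSectionVars false

section Semi2
variable {R : Type u} [CommRing R] {A : Type v} [CommRing A] [Algebra R A]
variable {m : ℕ} {W : Fin m → A} {K : Type u} [Field K] [Algebra R K]

theorem exists_var_of_field
    (hvar : ∀ (P : Ideal R) (_ : P.IsPrime), ∃ x : P.ResidueField ⊗[R] A,
      IsVar P.ResidueField (fun i => (1 : P.ResidueField) ⊗ₜ[R] W i) x)
    (k : Type*) [Field k] [Algebra R k] : ∃ x, IsVar k (fun i => (1 : k) ⊗ₜ[R] W i) x := by
  have hP : (RingHom.ker (algebraMap R k)).IsPrime := RingHom.ker_isPrime _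
  obtain ⟨φ⟩ := exists_residue_map (RingHom.ker (algebraMap R k)) k rfl
  obtain ⟨x, hx⟩ := hvar _ hP
  exact ⟨_, hx.bc φ⟩

theorem IsVar.nontrivial {k : Type*} [Field k] [Algebra R k] {x : k ⊗[R] A}
    (hx : IsVar k (fun i => (1 : k) ⊗ₜ[R] W i) x) : Nontrivial (k ⊗[R] A) :=
  hx.1.nontrivial

section V
variable (V : ValuationSubring K) [Algebra R V] [IsScalarTower R V K]

theorem Dk_V [Module.Flat R A] (D : Derivation R A A) (f : V ⊗[R] A) (c : V)
    (h : Dk K D (bc A (IsScalarTower.toAlgHom R V K) f) = (c : K) • 1) :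
    Dk (IsLocalRing.ResidueField V) D
      (bc A (IsScalarTower.toAlgHom R V (IsLocalRing.ResidueField V)) f) =
      (IsLocalRing.residue V c) • 1 := by
  have h1 : Dk V D f = c • 1 := by
    apply bc_injective (A := A) (IsScalarTower.toAlgHom R V K) (IsFractionRing.injective V K)
    rw [← Dk_bc, h, bc_smul, map_one]
    rfl
  rw [Dk_bc, h1, bc_smul, map_one]
  rfl

theorem isVar_residue' [Module.Flat R A]
    (hvar : ∀ (P : Ideal R) (_ : P.IsPrime), ∃ x : P.ResidueField ⊗[R] A,
      IsVar P.ResidueField (fun i => (1 : P.ResidueField) ⊗ₜ[R] W i) x)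
    (D : Derivation R A A) (hDW : ∀ i, D (W i) = 0) (f : V ⊗[R] A)
    (hf : IsVar K (fun i => (1 : K) ⊗ₜ[R] W i) (bc A (IsScalarTower.toAlgHom R V K) f))
    (h : Dk K D (bc A (IsScalarTower.toAlgHom R V K) f) = 1) :
    IsVar (IsLocalRing.ResidueField V) (fun i => (1 : IsLocalRing.ResidueField V) ⊗ₜ[R] W i)
      (bc A (IsScalarTower.toAlgHom R V (IsLocalRing.ResidueField V)) f) ∧
    Dk (IsLocalRing.ResidueField V) D
      (bc A (IsScalarTower.toAlgHom R V (IsLocalRing.ResidueField V)) f) = 1 := by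
  have h1 := Dk_V V D f 1 (by rw [h]; simp)
  rw [map_one, one_smul] at h1
  obtain ⟨x, hx⟩ := exists_var_of_field hvar (IsLocalRing.ResidueField V)
  refine ⟨isVar_residue f hf ?_ ⟨x, hx⟩, h1⟩
  rintro ⟨g, hg⟩
  rw [hg, D_aeval _ (Dk_W _ hDW)] at h1
  have := hx.nontrivial
  exact zero_ne_one h1

end V

/-- algebra structure on a valuation subring -/
abbrev algV (V : ValuationSubring K) (hV : ∀ r : R, algebraMap R K r ∈ V) : Algebra R V :=
  ((algebraMap R K).codRestrict V.toSubring hV).toAlgebra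

theorem towerV (V : ValuationSubring K) (hV : ∀ r : R, algebraMap R K r ∈ V) :
    letI := algV V hV
    IsScalarTower R V K := by
  letI := algV V hV
  exact IsScalarTower.of_algebraMap_eq fun r => rfl

theorem cond_a [Module.Flat R A]
    (hvar : ∀ (P : Ideal R) (_ : P.IsPrime), ∃ x : P.ResidueField ⊗[R] A,
      IsVar P.ResidueField (fun i => (1 : P.ResidueField) ⊗ₜ[R] W i) x)
    (D : Derivation R A A) (hDW : ∀ i, D (W i) = 0)
    (hu : ∀ (k : Type u) [Field k] [Algebra R k] (x : k ⊗[R] A),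
        IsVar k (fun i => (1 : k) ⊗ₜ[R] W i) x → IsUnit (Dk k D x))
    (x : K ⊗[R] A) (hx : IsVar K (fun i => (1 : K) ⊗ₜ[R] W i) x) (hDx : Dk K D x = 1)
    (V : ValuationSubring K) (hV : ∀ r : R, algebraMap R K r ∈ V) (c : K) (hc : c ≠ 0)
    (hcV : V.valuation c < 1) (h : c • pr K W x ∈ QN (QW R W) (VS V hV)) :
    c • pr K W x ∈ QN (QW R W) (VM V hV) := by
  letI := algV V hV
  have := towerV V hV
  obtain ⟨f, hf⟩ := lift_VS V hV h
  by_cases hn : ∃ g, bc A (IsScalarTower.toAlgHom R V (IsLocalRing.ResidueField V)) f =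
      MvPolynomial.aeval (R := IsLocalRing.ResidueField V)
        (fun i => (1 : IsLocalRing.ResidueField V) ⊗ₜ[R] W i) g
  · rw [← hf]
    exact mem_VM V hV f hn
  exfalso
  rw [← map_smul, ← sub_eq_zero, ← map_sub, pr_eq_zero] at hf
  obtain ⟨g, hg⟩ := hf
  rw [sub_eq_iff_eq_add'] at hg
  have hvf := hx.affine c (isUnit_iff_ne_zero.mpr hc) g
  rw [← hg] at hvf
  have hkv := exists_var_of_field hvar (IsLocalRing.ResidueField V)
  have h1 := isVar_residue f hvf hn hkv
  have h2 := hu _ _ h1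
  have hc1 : c ∈ V := (V.valuation_le_one_iff c).mp hcV.le
  have h3 := Dk_V V D f ⟨c, hc1⟩ (by
    rw [hg, map_add, Derivation.map_smul, hDx, D_aeval _ (Dk_W _ hDW), add_zero])
  have h4 : IsLocalRing.residue V ⟨c, hc1⟩ = 0 :=
    (IsLocalRing.residue_eq_zero_iff _).mpr ((V.valuation_lt_one_iff _).mpr hcV)
  rw [h3, h4, zero_smul] at h2
  have := h1.nontrivial
  exact not_isUnit_zero h2

theorem cond_b [Module.Flat R A]
    (hvar : ∀ (P : Ideal R) (_ : P.IsPrime), ∃ x : P.ResidueField ⊗[R] A,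
      IsVar P.ResidueField (fun i => (1 : P.ResidueField) ⊗ₜ[R] W i) x)
    (D : Derivation R A A) (hDW : ∀ i, D (W i) = 0)
    (hu : ∀ (k : Type u) [Field k] [Algebra R k] (x : k ⊗[R] A),
        IsVar k (fun i => (1 : k) ⊗ₜ[R] W i) x → IsUnit (Dk k D x))
    (x : K ⊗[R] A) (hx : IsVar K (fun i => (1 : K) ⊗ₜ[R] W i) x) (hDx : Dk K D x = 1)
    (P : Ideal R) (hP : P.IsPrime) :
    ∃ r ∉ P, ∃ ξ : QW R W, ∀ (V : ValuationSubring K) (hV : ∀ r : R, algebraMap R K r ∈ V),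
      (∀ r', V.valuation (algebraMap R K r') < 1 ↔ r' ∈ P) → pr K W x ∈ QN (QW R W) (VS V hV) →
      algebraMap R K r • pr K W x - 1 ⊗ₜ ξ ∈ QN (QW R W) (VM V hV) := by
  obtain ⟨y, hy⟩ := hvar P hP
  obtain ⟨xP, hxP, hDP⟩ := hy.normalize D (hu _ y hy)
  obtain ⟨r, hr, a, ha⟩ := exists_smul_eq P xP
  refine ⟨r, hr, (LinearMap.range (MvPolynomial.aeval (R := R) W).toLinearMap).mkQ a, ?_⟩
  intro V hV hVP h
  letI := algV V hV
  have := towerV V hV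
  obtain ⟨f, hf⟩ := lift_VS V hV h
  have hf' := hf
  rw [← sub_eq_zero, ← map_sub, pr_eq_zero] at hf
  obtain ⟨g, hg⟩ := hf
  rw [sub_eq_iff_eq_add'] at hg
  have hvf := hx.affine 1 isUnit_one g
  rw [one_smul, ← hg] at hvf
  obtain ⟨h1, h2⟩ := isVar_residue' V hvar D hDW f hvf (by
    rw [hg, map_add, hDx, D_aeval _ (Dk_W _ hDW), add_zero])
  obtain ⟨φ⟩ := exists_residue_map P (IsLocalRing.ResidueField V) (ker_residue V P hVP)
  obtain ⟨g', hg'⟩ := IsVar.sub_mem _ (Dk_W _ hDW) (hxP.bc φ) h1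
    (by rw [Dk_bc, hDP, map_one]) h2
  have key := mem_VM V hV (W := W) (r • f - 1 ⊗ₜ a) ⟨algebraMap R _ r • g', by
    have h5 : (1 : IsLocalRing.ResidueField V) ⊗ₜ[R] a = r • bc A φ xP := by
      rw [← map_smul, ha]
      simp [bc]
    have h6 : bc A (IsScalarTower.toAlgHom R V (IsLocalRing.ResidueField V)) (1 ⊗ₜ[R] a) =
      (1 : IsLocalRing.ResidueField V) ⊗ₜ[R] a := by simp [bc]
    rw [map_sub, h6, h5, map_smul, ← smul_sub, hg', map_smul, algebraMap_smul]⟩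
  convert key using 1
  rw [map_sub, map_sub, map_smul, LinearMap.map_smul_of_tower, hf', algebraMap_smul]
  congr 1

theorem semi_case [IsDomain R] [IsNoetherianRing R] [Module.Flat R A]
    (hsn : ∀ b c : R, b ^ 3 = c ^ 2 → ∃ a : R, a ^ 2 = b ∧ a ^ 3 = c)
    (hvar : ∀ (P : Ideal R) (_ : P.IsPrime), ∃ x : P.ResidueField ⊗[R] A,
      IsVar P.ResidueField (fun i => (1 : P.ResidueField) ⊗ₜ[R] W i) x)
    (D : Derivation R A A) (hDW : ∀ i, D (W i) = 0)
    (hu : ∀ (k : Type u) [Field k] [Algebra R k] (x : k ⊗[R] A),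
        IsVar k (fun i => (1 : k) ⊗ₜ[R] W i) x → IsUnit (Dk k D x)) :
    ∃ s, IsVar R W s := by
  let K := FractionRing R
  have hflat : Module.Flat R (QW R W) := flat_Q hvar
  obtain ⟨y, hy⟩ := exists_var_of_field hvar K
  obtain ⟨x, hx, hDx⟩ := hy.normalize D (hu _ y hy)
  obtain ⟨ξ, hξ⟩ := descent hsn (pr K W x)
    (fun V hV c hc hcV h => cond_a hvar D hDW hu x hx hDx V hV c hc hcV h)
    (fun P hP => cond_b hvar D hDW hu x hx hDx P hP)
  obtain ⟨s, rfl⟩ := Submodule.mkQ_surjective _ ξ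
  rw [← pr_tmul, eq_comm, ← sub_eq_zero, ← map_sub, pr_eq_zero] at hξ
  obtain ⟨g, hg⟩ := hξ
  rw [sub_eq_iff_eq_add'] at hg
  have hvs := hx.affine 1 isUnit_one g
  rw [one_smul, ← hg] at hvs
  have hDs : Dk K D (1 ⊗ₜ s) = 1 := by
    rw [hg, map_add, hDx, D_aeval _ (Dk_W _ hDW), add_zero]
  refine ⟨s, isVar_of_fibers s ?_⟩
  intro P hP
  let e : R ≃+* (algebraMap R K).range := RingEquiv.ofBijective (algebraMap R K).rangeRestrict
    ⟨fun a b h => IsFractionRing.injective R K (congrArg Subtype.val h), (algebraMap R K).rangeRestrict_surjective⟩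
  have : (P.comap e.symm).IsPrime := Ideal.comap_isPrime _ _
  obtain ⟨V, hV, hc⟩ := exists_valuationSubring_center (algebraMap R K).range (P.comap e.symm)
  have hV' : ∀ r : R, algebraMap R K r ∈ V := fun r => hV ⟨r, rfl⟩
  have hVP : ∀ r', V.valuation (algebraMap R K r') < 1 ↔ r' ∈ P := by
    intro r'
    have h1 := hc (e r')
    rw [Ideal.mem_comap] at h1
    have h2 : e.symm (e r') = r' := e.symm_apply_apply r'
    change _ ↔ e.symm (e r') ∈ P at h1
    rw [h2] at h1
    exact h1
  letI := algV V hV'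
  have := towerV V hV'
  have h6 : bc A (IsScalarTower.toAlgHom R V K) (1 ⊗ₜ[R] s) = (1 : K) ⊗ₜ[R] s := by simp [bc]
  have h7 : bc A (IsScalarTower.toAlgHom R V (IsLocalRing.ResidueField V)) (1 ⊗ₜ[R] s) =
      (1 : IsLocalRing.ResidueField V) ⊗ₜ[R] s := by simp [bc]
  refine ⟨IsLocalRing.ResidueField V, inferInstance, inferInstance, ker_residue V P hVP, ?_⟩
  rw [← h7]
  exact (isVar_residue' V hvar D hDW _ (by rw [h6]; exact hvs) (by rw [h6]; exact hDs)).1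

end Semi2
end ResVar

namespace ResVar
universe u v w
set_option linter.unusedSectionVars false

section Fin
variable {R : Type u} [CommRing R] {A : Type v} [CommRing A] [Algebra R A]

theorem exists_phi {m : ℕ} {W : Fin m → A} (hW : AlgebraicIndependent R W)
    (k : Type*) [CommRing k] [Algebra R k] :
    ∃ φ : MvPolynomial (Fin m) k ≃ₐ[k] k ⊗[R] Algebra.adjoin R (Set.range W),
      ∀ g, Algebra.TensorProduct.map (AlgHom.id R k) (Algebra.adjoin R (Set.range W)).val (φ g) =
        MvPolynomial.aeval (R := k) (fun i => (1 : k) ⊗ₜ[R] W i) g := by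
  let φ : MvPolynomial (Fin m) k ≃ₐ[k] k ⊗[R] Algebra.adjoin R (Set.range W) :=
    (MvPolynomial.algebraTensorAlgEquiv R k).symm.trans
      (Algebra.TensorProduct.congr AlgEquiv.refl hW.aevalEquiv)
  refine ⟨φ, ?_⟩
  intro g
  induction g using MvPolynomial.induction_on with
  | C a =>
    have : φ (MvPolynomial.C a) = a ⊗ₜ 1 := by
      exact φ.commutes a
    rw [this]
    simp
  | add p q hp hq => simp only [map_add] at hp hq ⊢; rw [hp, hq]
  | mul_X p n hp =>
    simp only [map_mul] at hp ⊢
    rw [hp]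
    congr 1
    simp [φ]

theorem fiber_of_isVar {m : ℕ} {W : Fin m → A} (hW : AlgebraicIndependent R W)
    (k : Type*) [CommRing k] [Algebra R k] {x : k ⊗[R] A}
    (hx : IsVar k (fun i => (1 : k) ⊗ₜ[R] W i) x) :
    ∃ e : (k ⊗[R] A) ≃+* MvPolynomial (Fin 1) (k ⊗[R] Algebra.adjoin R (Set.range W)),
      ∀ z, e (Algebra.TensorProduct.map (AlgHom.id R k) (Algebra.adjoin R (Set.range W)).val z) =
        MvPolynomial.C z := by
  obtain ⟨φ, hφ⟩ := exists_phi hW k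
  obtain ⟨e, hX, hC⟩ := hx.equiv
  let E := (e.symm.toRingEquiv.trans (Polynomial.mapEquiv φ.toRingEquiv)).trans
    (MvPolynomial.uniqueAlgEquiv (k ⊗[R] Algebra.adjoin R (Set.range W)) (Fin 1)).symm.toRingEquiv
  refine ⟨E, ?_⟩
  intro z
  obtain ⟨g, rfl⟩ := φ.surjective z
  rw [hφ, ← hC]
  simp [E]

theorem alg_of_isVar {m : ℕ} {W : Fin m → A} (hW : AlgebraicIndependent R W) {s : A}
    (hs : IsVar R W s) : Nonempty (A ≃ₐ[↥(Algebra.adjoin R (Set.range W))]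
          Polynomial ↥(Algebra.adjoin R (Set.range W))) := by
  obtain ⟨e, hX, hC⟩ := hs.equiv
  let E : A ≃+* Polynomial ↥(Algebra.adjoin R (Set.range W)) :=
    e.symm.toRingEquiv.trans (Polynomial.mapEquiv hW.aevalEquiv.toRingEquiv)
  refine ⟨AlgEquiv.ofRingEquiv (f := E) ?_⟩
  intro b
  obtain ⟨g, rfl⟩ := hW.aevalEquiv.surjective b
  rw [hW.algebraMap_aevalEquiv, ← hC]
  simp [E]

theorem isVar_of_alg {m : ℕ} {W : Fin m → A} (hW : AlgebraicIndependent R W)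
    (e : A ≃ₐ[↥(Algebra.adjoin R (Set.range W))]
          Polynomial ↥(Algebra.adjoin R (Set.range W))) : ∃ s, IsVar R W s := by
  let E : Polynomial (MvPolynomial (Fin m) R) ≃+* A :=
    (Polynomial.mapEquiv hW.aevalEquiv.toRingEquiv).trans e.symm.toRingEquiv
  refine ⟨E Polynomial.X, IsVar.of_ringEquiv E rfl ?_⟩
  intro g
  have h1 : E (Polynomial.C g) = e.symm (algebraMap _ _ (hW.aevalEquiv g)) := by simp [E]
  rw [h1, AlgEquiv.commutes, hW.algebraMap_aevalEquiv]

theorem mvPoly_of_isVar {m : ℕ} {W : Fin m → A} {s : A}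
    (hs : IsVar R W s) : Nonempty (A ≃ₐ[R] MvPolynomial (Fin (m + 1)) R) :=
  ⟨(AlgEquiv.ofBijective _ hs).symm.trans (MvPolynomial.renameEquiv R (finSuccEquiv m).symm)⟩

theorem endo_injective {S : Type*} [CommRing S] [IsNoetherianRing S] (f : S →+* S)
    (hf : Function.Surjective f) : Function.Injective f := by
  let I : ℕ →o Ideal S := ⟨fun n => RingHom.ker (f ^ n), monotone_nat_of_le_succ (by
    intro n x hx
    rw [RingHom.mem_ker, RingHom.coe_pow] at hx ⊢
    rw [Function.iterate_succ_apply', hx, map_zero])⟩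
  obtain ⟨n, hn⟩ := monotone_stabilizes_iff_noetherian.mpr ‹IsNoetherianRing S› I
  rw [injective_iff_map_eq_zero]
  intro x hx
  obtain ⟨y, rfl⟩ := hf.iterate n x
  have h1 : y ∈ I (n + 1) := by
    change y ∈ RingHom.ker (f ^ (n + 1))
    rw [RingHom.mem_ker, RingHom.coe_pow, Function.iterate_succ_apply', hx]
  rw [← hn (n + 1) (Nat.le_succ n)] at h1
  change y ∈ RingHom.ker (f ^ n) at h1
  rwa [RingHom.mem_ker, RingHom.coe_pow] at h1

theorem algInd_of_alg [IsNoetherianRing R] {m : ℕ} {W : Fin m → A}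
    (e : A ≃ₐ[↥(Algebra.adjoin R (Set.range W))]
          Polynomial ↥(Algebra.adjoin R (Set.range W)))
    (e2 : A ≃ₐ[R] MvPolynomial (Fin (m + 1)) R) : AlgebraicIndependent R W := by
  let θ : MvPolynomial (Fin m) R →ₐ[R] Algebra.adjoin R (Set.range W) :=
    (MvPolynomial.aeval W).codRestrict _ (by
      intro g
      rw [Algebra.adjoin_range_eq_range_aeval]
      exact ⟨g, rfl⟩)
  have hθ : Function.Surjective θ := by
    rintro ⟨b, hb⟩
    have hb' := hb
    rw [Algebra.adjoin_range_eq_range_aeval] at hb'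
    obtain ⟨g, hg⟩ := hb'
    exact ⟨g, Subtype.ext hg⟩
  let σ : Polynomial (MvPolynomial (Fin m) R) →+* Polynomial (MvPolynomial (Fin m) R) :=
    (MvPolynomial.finSuccEquiv R m).toRingEquiv.toRingHom.comp (e2.toRingEquiv.toRingHom.comp
      (e.symm.toRingEquiv.toRingHom.comp (Polynomial.mapRingHom θ.toRingHom)))
  have hσ : Function.Surjective σ := 
    (MvPolynomial.finSuccEquiv R m).surjective.comp (e2.surjective.comp (e.symm.surjective.comp
      (Polynomial.map_surjective _ hθ)))
  have hinj := endo_injective σ hσ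
  intro a b hab
  have h1 : θ a = θ b := Subtype.ext hab
  apply Polynomial.C_injective
  apply hinj
  have : Polynomial.map θ.toRingHom (Polynomial.C a) = Polynomial.map θ.toRingHom (Polynomial.C b) := by
    rw [Polynomial.map_C, Polynomial.map_C]
    exact congrArg _ h1
  exact congrArg (fun p => MvPolynomial.finSuccEquiv R m (e2 (e.symm p))) this

end Fin
end ResVar

/-- Let `R` be a Noetherian domain which either contains `ℚ` or is seminormal, and let
`A` be an `𝔸^{m+1}`-fibration over `R` such that `Ω_R(A)` is a stably free `A`-module.
Then an `m`-tuple `W` of elements of `A` is an `m`-tuple residual variable of `A` over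
`R` if and only if `A = R[W]^[1]` as an `R[W]`-algebra (and hence `A = R^[m+1]`). -/
theorem residualVariable_iff_variable
    (R A : Type*) [CommRing R] [IsDomain R] [IsNoetherianRing R]
    [CommRing A] [Algebra R A]
    (hR : Nonempty (ℚ →+* R) ∨
      ∀ b c : R, b ^ 3 = c ^ 2 → ∃ a : R, a ^ 2 = b ∧ a ^ 3 = c)
    (m : ℕ) (hA : IsAffineFibration R A (m + 1))
    (hΩ : IsStablyFree A (KaehlerDifferential R A))
    (W : Fin m → A) :
    IsResidualVariable R A (m + 1) m W ↔
      (Nonempty (A ≃ₐ[↥(Algebra.adjoin R (Set.range W))]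
          Polynomial ↥(Algebra.adjoin R (Set.range W))) ∧
        Nonempty (A ≃ₐ[R] MvPolynomial (Fin (m + 1)) R)) := by
  constructor
  · rintro ⟨hW, hfib⟩
    rw [Nat.add_sub_cancel_left] at hfib
    have hflat : Module.Flat R A := hA.2.1
    have hvar : ∀ (P : Ideal R) (_ : P.IsPrime), ∃ x : P.ResidueField ⊗[R] A,
        ResVar.IsVar P.ResidueField (fun i => (1 : P.ResidueField) ⊗ₜ[R] W i) x := by
      intro P hP
      letI : Algebra (ResidueFieldAt R P ⊗[R] Algebra.adjoin R (Set.range W)) (ResidueFieldAt R P ⊗[R] A) :=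
        (Algebra.TensorProduct.map (AlgHom.id R (ResidueFieldAt R P))
          (IsScalarTower.toAlgHom R (Algebra.adjoin R (Set.range W)) A)).toRingHom.toAlgebra
      obtain ⟨e⟩ := hfib P hP
      refine ResVar.isVar_of_fiber hW P.ResidueField e.toRingEquiv ?_
      intro z
      exact e.commutes z
    obtain ⟨s, t, ⟨Θ⟩⟩ := hΩ
    obtain ⟨x₀, hx₀⟩ := hvar ⊥ Ideal.isPrime_bot
    have := hx₀.nontrivial
    obtain ⟨D, hDW, hu⟩ := ResVar.exists_derivation Θ W _ x₀ hx₀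
    have hs : ∃ s, ResVar.IsVar R W s := by
      rcases hR with ⟨⟨f⟩⟩ | hsn
      · let _ : Algebra ℚ R := f.toAlgebra
        exact ResVar.rat_case hvar D hDW hu
      · exact ResVar.semi_case hsn hvar D hDW hu
    obtain ⟨s, hs⟩ := hs
    exact ⟨ResVar.alg_of_isVar hW hs, ResVar.mvPoly_of_isVar hs⟩
  · rintro ⟨⟨e⟩, ⟨e2⟩⟩
    have hW := ResVar.algInd_of_alg e e2
    refine ⟨hW, ?_⟩
    rw [Nat.add_sub_cancel_left]
    obtain ⟨s, hs⟩ := ResVar.isVar_of_alg hW e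
    intro P hP
    obtain ⟨E, hE⟩ := ResVar.fiber_of_isVar hW (ResidueFieldAt R P) (hs.baseChange (k' := ResidueFieldAt R P))
    letI : Algebra (ResidueFieldAt R P ⊗[R] Algebra.adjoin R (Set.range W)) (ResidueFieldAt R P ⊗[R] A) :=
      (Algebra.TensorProduct.map (AlgHom.id R (ResidueFieldAt R P))
        (IsScalarTower.toAlgHom R (Algebra.adjoin R (Set.range W)) A)).toRingHom.toAlgebra
    exact ⟨AlgEquiv.ofRingEquiv (f := E) (fun z => hE z)⟩
end

section
/- Let R ⊆ B ⊆ A be Noetherian commutative rings such that A is an 𝔸ⁿ-fibration over R, B is an 𝔸ᵐ-fibration over R, and for every prime ideal P of R, A ⊗_R κ(P) is isomorphic, as a (B ⊗_R κ(P))-algebra, to a polynomial ring in n − m variables over B ⊗_R κ(P). Then Ω_R(A) is isomorphic as an A-module to Ω_B(A) ⊕ (Ω_R(B) ⊗_B A). -/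
open TensorProduct

/-- Derivations extend along algebras whose base change to `k` is a polynomial ring. -/
theorem derivation_extend_aux {R B A k K V ι : Type*} [CommRing R] [CommRing B] [CommRing A]
    [CommRing k] [CommRing K] [AddCommGroup V]
    [Algebra R B] [Algebra R A] [Algebra B A] [IsScalarTower R B A] [Algebra R k]
    [Algebra R K] [Algebra A K] [Algebra B K] [IsScalarTower R A K] [IsScalarTower R B K]
    [IsScalarTower B A K]
    [Module K V] [Module A V] [Module B V] [Module R V] [IsScalarTower R K V]
    [IsScalarTower A K V] [IsScalarTower B K V]
    (c : k →ₐ[R] K)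
    (e : (k ⊗[R] A) ≃+* MvPolynomial ι (k ⊗[R] B))
    (he : ∀ x, e (Algebra.TensorProduct.map (AlgHom.id R k) (IsScalarTower.toAlgHom R B A) x)
      = MvPolynomial.C x)
    (d : Derivation R B V) : ∃ D : Derivation R A V, ∀ b, D (algebraMap B A b) = d b := by
  let : Module Kᵐᵒᵖ V := Module.compHom V ((RingHom.id K).fromOpposite fun _ _ => mul_comm _ _)
  have : IsCentralScalar K V := ⟨fun _ _ => rfl⟩
  let : Module Rᵐᵒᵖ V := Module.compHom V ((RingHom.id R).fromOpposite fun _ _ => mul_comm _ _)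
  have : IsCentralScalar R V := ⟨fun _ _ => rfl⟩
  have : IsScalarTower R Kᵐᵒᵖ V := ⟨fun r x v => by
    exact smul_assoc r x.unop v⟩
  let fB : B →ₐ[R] TrivSqZeroExt K V :=
    { toFun := fun b => TrivSqZeroExt.inl (algebraMap B K b) + TrivSqZeroExt.inr (d b)
      map_one' := by ext <;> simp
      map_zero' := by ext <;> simp
      map_add' := fun x y => by ext <;> simp
      map_mul' := fun x y => by ext <;> simp
      commutes' := fun r => by
        ext <;> simp [TrivSqZeroExt.algebraMap_eq_inl', ← IsScalarTower.algebraMap_apply] }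
  have hfB1 : ∀ b, (fB b).fst = algebraMap B K b := fun b => by simp [fB]
  have hfB2 : ∀ b, (fB b).snd = d b := fun b => by simp [fB]
  let θ : k ⊗[R] B →ₐ[R] TrivSqZeroExt K V :=
    Algebra.TensorProduct.lift ((TrivSqZeroExt.inlAlgHom R K V).comp c) fB
      (fun _ _ => Commute.all _ _)
  let φ : k ⊗[R] A →ₐ[R] K :=
    Algebra.TensorProduct.lift c (IsScalarTower.toAlgHom R A K) (fun _ _ => Commute.all _ _)
  let g : MvPolynomial ι (k ⊗[R] B) →+* TrivSqZeroExt K V :=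
    MvPolynomial.eval₂Hom θ.toRingHom
      (fun i => TrivSqZeroExt.inl (φ (e.symm (MvPolynomial.X i))))
  have hθ : ∀ x, (θ x).fst = φ (Algebra.TensorProduct.map (AlgHom.id R k)
      (IsScalarTower.toAlgHom R B A) x) := by
    intro x
    induction x with
    | zero => simp
    | add x y hx hy => simp [hx, hy]
    | tmul x y => simp [θ, φ, hfB1, ← IsScalarTower.algebraMap_apply]
  have hg : ((TrivSqZeroExt.fstHom R K V).toRingHom.comp g) =
      φ.toRingHom.comp e.symm.toRingHom := by
    apply MvPolynomial.ringHom_ext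
    · intro x
      have : e.symm (MvPolynomial.C x) = _ := (e.symm_apply_eq).2 (he x).symm
      simp [g, hθ, this]
    · intro i
      simp [g]
  let ψ : A →+* TrivSqZeroExt K V :=
    (g.comp e.toRingHom).comp (Algebra.TensorProduct.includeRight : A →ₐ[R] k ⊗[R] A).toRingHom
  have hψ1 : ∀ a, (ψ a).fst = algebraMap A K a := by
    intro a
    have := congrArg (fun f => f (e (1 ⊗ₜ a))) hg
    simpa [ψ, φ] using this
  have hψ2 : ∀ b, ψ (algebraMap B A b) = fB b := by
    intro b
    have h := he (1 ⊗ₜ b)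
    simp at h
    simp [ψ, h, g, θ]
  have hψ3 : ∀ r, ψ (algebraMap R A r) = TrivSqZeroExt.inl (algebraMap R K r) := by
    intro r
    rw [IsScalarTower.algebraMap_apply R B A, hψ2, AlgHom.commutes,
      TrivSqZeroExt.algebraMap_eq_inl']
  refine ⟨Derivation.mk'
    { toFun := fun a => (ψ a).snd
      map_add' := by simp
      map_smul' := fun r a => by
        rw [Algebra.smul_def, map_mul, hψ3, TrivSqZeroExt.snd_mul]
        simp } ?_, ?_⟩
  · intro a b
    simp [TrivSqZeroExt.snd_mul, hψ1]
  · intro b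
    simp [hψ2, hfB2]

theorem exists_retraction_aux {A M N : Type*} [CommRing A] [AddCommGroup M] [AddCommGroup N]
    [Module A M] [Module A N] [Module.Finite A M] [Module.Projective A N] (f : M →ₗ[A] N)
    (H : ∀ (I : Ideal A) [I.IsMaximal], ∃ g : N →ₗ[A] M ⧸ (I • (⊤ : Submodule A M)),
      g ∘ₗ f = Submodule.mkQ _) : ∃ l : N →ₗ[A] M, l ∘ₗ f = LinearMap.id := by
  let J : Ideal A :=
    { carrier := {a | ∃ g : N →ₗ[A] M, g ∘ₗ f = a • LinearMap.id}
      add_mem' := by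
        rintro a b ⟨g, hg⟩ ⟨h, hh⟩
        exact ⟨g + h, by rw [LinearMap.add_comp, hg, hh, add_smul]⟩
      zero_mem' := ⟨0, by simp⟩
      smul_mem' := by
        rintro c a ⟨g, hg⟩
        exact ⟨c • g, by rw [LinearMap.smul_comp, hg, smul_smul, smul_eq_mul]⟩ }
  suffices h : J = ⊤ by
    obtain ⟨l, hl⟩ := (Ideal.eq_top_iff_one J).1 h
    exact ⟨l, by simpa using hl⟩
  by_contra hJ
  obtain ⟨I, hI, hJI⟩ := Ideal.exists_le_maximal J hJ
  obtain ⟨g, hg⟩ := H I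
  obtain ⟨g', hg'⟩ := Module.projective_lifting_property (Submodule.mkQ _) g
    (Submodule.mkQ_surjective _)
  let h : M →ₗ[A] M := LinearMap.id - g' ∘ₗ f
  have hh : LinearMap.range h ≤ I • (⊤ : Submodule A M) := by
    rintro _ ⟨x, rfl⟩
    rw [← Submodule.Quotient.mk_eq_zero]
    have h1 := LinearMap.congr_fun hg x
    rw [← hg'] at h1
    simp only [LinearMap.comp_apply, Submodule.mkQ_apply] at h1
    simp [h, h1]
  obtain ⟨p, hp, -, hc, h0⟩ :=
    LinearMap.exists_monic_and_natDegree_eq_and_coeff_mem_pow_and_aeval_eq_zero (R := A) h I hh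
  have hmem : p.eval 1 ∈ J := by
    obtain ⟨q, hq⟩ := Polynomial.X_sub_C_dvd_sub_C_eval (a := 1) (p := p)
    have h2 := congrArg (Polynomial.aeval h) hq
    rw [mul_comm, map_mul, map_sub, map_sub, h0, Polynomial.aeval_C, Polynomial.aeval_X,
      Polynomial.aeval_C] at h2
    refine ⟨(Polynomial.aeval h q) ∘ₗ g', ?_⟩
    have h3 : g' ∘ₗ f = LinearMap.id - h := by simp [h]
    rw [LinearMap.comp_assoc, h3]
    ext x
    have h4 := LinearMap.congr_fun h2 x
    simp [Module.End.mul_apply, Module.algebraMap_end_apply] at h4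
    simp
    rw [← neg_sub, neg_eq_iff_eq_neg] 
    simp [← h4]
  have h1 : p.eval 1 - 1 ∈ I := by
    rw [Polynomial.eval_eq_sum_range, Finset.sum_range_succ]
    simp only [one_pow, mul_one, hp.coeff_natDegree, add_sub_cancel_right]
    refine Ideal.sum_mem _ fun i hi => ?_
    exact Ideal.pow_le_self (Nat.sub_ne_zero_of_lt (Finset.mem_range.1 hi)) (hc i)
  exact hI.ne_top ((Ideal.eq_top_iff_one I).2 (by
    simpa using I.sub_mem (hJI hmem) h1))

theorem smooth_aux (R A : Type*) [CommRing R] [CommRing A] [IsNoetherianRing R]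
    [Algebra R A] (n : ℕ) (hA : IsAffineFibration R A n) : Algebra.Smooth R A := by
  obtain ⟨h1, h2, h3⟩ := hA
  have : Algebra.FinitePresentation R A := Algebra.FinitePresentation.of_finiteType.1 h1
  refine Algebra.Smooth.of_formallySmooth_fiber fun I hI => ?_
  obtain ⟨e⟩ := h3 I hI
  exact Algebra.FormallySmooth.of_equiv e.symm

theorem retraction_at_maximal_aux
    (R B A : Type*) [CommRing R] [CommRing B] [CommRing A]
    [Algebra R B] [Algebra R A] [Algebra B A] [IsScalarTower R B A]
    (n : ℕ) (hfib : FibersPolynomialOver R B A n) (I : Ideal A) [hI : I.IsMaximal] :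
    ∃ g : KaehlerDifferential R A →ₗ[A]
      ((A ⊗[B] KaehlerDifferential R B) ⧸
        (I • (⊤ : Submodule A (A ⊗[B] KaehlerDifferential R B)))),
      g ∘ₗ KaehlerDifferential.mapBaseChange R B A = Submodule.mkQ _ := by
  let P : Ideal R := I.comap (algebraMap R A)
  have hP : P.IsPrime := inferInstance
  obtain ⟨e⟩ := hfib P hP
  let : Field (A ⧸ I) := Ideal.Quotient.field I
  let c : P.ResidueField →ₐ[R] (A ⧸ I) := Ideal.ResidueField.liftₐ P (Algebra.ofId R (A ⧸ I))
    (by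
      intro x hx
      have hx' : algebraMap R A x ∈ I := hx
      rw [RingHom.mem_ker]
      change algebraMap R (A ⧸ I) x = 0
      rw [IsScalarTower.algebraMap_apply R A]
      exact Ideal.Quotient.eq_zero_iff_mem.2 hx')
    (by
      intro x hx
      have hx' : algebraMap R A x ∉ I := hx
      change IsUnit (algebraMap R (A ⧸ I) x)
      rw [isUnit_iff_ne_zero, IsScalarTower.algebraMap_apply R A]
      exact fun h => hx' (Ideal.Quotient.eq_zero_iff_mem.1 h))
  let M := A ⊗[B] KaehlerDifferential R B
  let V := M ⧸ (I • (⊤ : Submodule A M))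
  have : IsScalarTower A (A ⧸ I) V := inferInstance
  have : IsScalarTower R (A ⧸ I) V := .to₁₃₄ R A (A ⧸ I) V
  have : IsScalarTower B (A ⧸ I) V := .to₁₃₄ B A (A ⧸ I) V
  let δ : KaehlerDifferential R B →ₗ[B] V :=
    ((Submodule.mkQ (I • (⊤ : Submodule A M))).restrictScalars B) ∘ₗ TensorProduct.mk B A _ 1
  let : Algebra (ResidueFieldAt R P ⊗[R] B) (ResidueFieldAt R P ⊗[R] A) :=
    (Algebra.TensorProduct.map (AlgHom.id R (ResidueFieldAt R P))
      (IsScalarTower.toAlgHom R B A)).toRingHom.toAlgebra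
  obtain ⟨D, hD⟩ := derivation_extend_aux (R := R) (B := B) (A := A) (K := A ⧸ I) (V := V) c
    e.toRingEquiv (fun x => e.commutes x) (δ.compDer (KaehlerDifferential.D R B))
  refine ⟨D.liftKaehlerDifferential, ?_⟩
  apply TensorProduct.AlgebraTensorModule.curry_injective
  ext b
  have := hD b
  simp [KaehlerDifferential.map_D, this, δ]
  rfl

/-- Let `R ⊆ B ⊆ A` be Noetherian rings such that `A` is an `𝔸ⁿ`-fibration over `R`,
`B` an `𝔸ᵐ`-fibration over `R`, and `A ⊗_R κ(P) = (B ⊗_R κ(P))^[n-m]` for every prime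
ideal `P` of `R`.  Then `Ω_R(A) ≅ Ω_B(A) ⊕ (Ω_R(B) ⊗_B A)` as `A`-modules. -/
theorem kaehler_decomposition_intermediate
    (R B A : Type*) [CommRing R] [CommRing B] [CommRing A]
    [IsNoetherianRing R] [IsNoetherianRing B] [IsNoetherianRing A]
    [Algebra R B] [Algebra R A] [Algebra B A] [IsScalarTower R B A]
    (hRB : Function.Injective (algebraMap R B))
    (hBA : Function.Injective (algebraMap B A))
    (n m : ℕ)
    (hA : IsAffineFibration R A n) (hB : IsAffineFibration R B m)
    (hfib : FibersPolynomialOver R B A (n - m)) :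
    Nonempty ((KaehlerDifferential R A) ≃ₗ[A]
      ((KaehlerDifferential B A) × (A ⊗[B] (KaehlerDifferential R B)))) := by
  have : Algebra.Smooth R A := smooth_aux R A n hA
  have : Algebra.FiniteType R B := hB.1
  obtain ⟨l, hl⟩ := exists_retraction_aux (KaehlerDifferential.mapBaseChange R B A)
    (fun I _ => retraction_at_maximal_aux R B A (n - m) hfib I)
  exact ⟨((KaehlerDifferential.exact_mapBaseChange_map R B A).splitInjectiveEquiv
    (KaehlerDifferential.map_surjective R B A) ⟨l, hl⟩).1.trans (LinearEquiv.prodComm A _ _)⟩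
end
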